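/- Let N ≥ 2, let B ⊂ ℝ^N be a bounded radial domain (an open ball or open annulus centered at the origin) and set I = closure{|x| : x ∈ B}. Suppose f : [0,∞) × I × ℝ → ℝ, (t,r,u) ↦ f(t,r,u), is continuous in (t,r) and locally Lipschitz in u uniformly in (t,r) (for every K > 0 there is L = L(K) > 0 with |f(t,r,u₁) − f(t,r,u₂)| ≤ L|u₁ − u₂| for all (t,r) ∈ [0,∞) × I and u₁,u₂ ∈ [−K,K]), and that f(·,·,0) is bounded on [0,∞) × I. Let u ∈ C^{2,1}(B × (0,∞)) ∩ C(B̄ × [0,∞)) be a classical solution of u_t = Δu + f(t,|x|,u) in B × (0,∞) with u = 0 on ∂B × (0,∞) and u(·,0) = u₀ in B. Assume (U1): there is e ∈ S with u₀(x) ≥ u₀(σ_e(x)) for all x ∈ B(e) and u₀ ∘ σ_e ≢ u₀ on B(e); and (U2): sup_{t ≥ 0} ‖u(·,t)‖_{L^∞(B)} < ∞. Then there exists p ∈ S such that every element of the omega limit set ω(u) is foliated Schwarz symmetric with respect to p. -/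

import Mathlib

/-!
For a unit vector `e` the reflected difference `w = u - u ∘ σ_e` vanishes on the boundary of the
half domain `B(e)` and satisfies `|w_t - Δw| ≤ L |w|` there, with `L` independent of `e`.

The analytic core is a positivity estimate: if `w ≥ δ` on a fixed small ball at time `a`, and its
negative part at time `a` is smaller than a threshold depending only on `δ`, the ball and a
positive lower bound for `x₀·e` at its center `x₀`, then `w ≥ 0` at time `a + 2`. Harnack and Hopf
type estimates are replaced by explicit barriers and the weak maximum principle. Two
supersolutions bound the negative part of `w` first by a multiple of `x·e` and then by a multiple
of `(x·e) g(|x|²)`, with `g(|x|²)` vanishing on `∂B`. Subsolutions supported in a moving ball,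
multiplied by `x·e`, carry the positivity from the fixed ball to a ball at any prescribed point
and dominate `(x·e) g(|x|²)` there. The factor `x·e` makes these barriers vanish on `H(e)`, so the
balls may cross the hyperplane.

Consequently, if a profile `z` satisfies the reflection inequality `z ∘ σ_e ≤ z` on `B(e)` without
being symmetric, and `u(·,t₀)` is close to `z`, then `u(·,t)` satisfies the reflection inequality
for all `t ≥ t₀ + 2` and all directions near `e`. Let `A` be the set of directions for which every
element of `ω(u)` satisfies the reflection inequality. It is closed, it contains a neighborhood of
the direction `e₀` of (U1), and it is open at every `e ∈ A` for which some element of `ω(u)` is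
asymmetric.

The axis is found through the first moment `V_z = ∫_B z(x) x dx`. For `e ∈ A` one has `V_z·e ≥ 0`,
with equality exactly when `z` is symmetric with respect to `H(e)`. If `V_z ≠ 0` for some
`z ∈ ω(u)`, then `A` is open at each of its points in the open hemisphere around `V_z`, hence by
connectedness it contains the closed hemisphere, and `p = V_z/|V_z|` works for all of `ω(u)`: two
points of equal norm are exchanged by a reflection. If all first moments vanish, every `z ∈ ω(u)`
is symmetric with respect to all directions near `e₀`, hence, bisecting angles, with respect to
all directions, and any `p` works.
-/

open Set Metric Filter
open scoped RealInnerProductSpace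

noncomputable section

variable {N : ℕ}

/-- Reflection through the hyperplane `H(e) = {x : ⟪x,e⟫ = 0}`:
`σ_e(x) = x - 2 (x·e) e`. -/
def reflHyp (e x : EuclideanSpace ℝ (Fin N)) : EuclideanSpace ℝ (Fin N) :=
  x - (2 * ⟪x, e⟫) • e

/-- The half domain `B(e) = {x ∈ B : x·e > 0}`. -/
def halfDom (B : Set (EuclideanSpace ℝ (Fin N))) (e : EuclideanSpace ℝ (Fin N)) :
    Set (EuclideanSpace ℝ (Fin N)) := {x ∈ B | 0 < ⟪x, e⟫}

/-- A (bounded) radial domain: an open ball or an open annulus centered at the origin. -/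
def IsRadialDomain (B : Set (EuclideanSpace ℝ (Fin N))) : Prop :=
  (∃ R, 0 < R ∧ B = Metric.ball 0 R) ∨
  (∃ r R, 0 < r ∧ r < R ∧ B = {x : EuclideanSpace ℝ (Fin N) | r < ‖x‖ ∧ ‖x‖ < R})

/-- `u` is foliated Schwarz symmetric on `D` with respect to the unit vector `p`:
`u(x) ≥ u(y)` whenever `|x| = |y|` and `x·p ≥ y·p`.  (This is equivalent to axial
symmetry with respect to `ℝp` together with monotonicity in the polar angle.) -/
def FoliatedSchwarzOn (D : Set (EuclideanSpace ℝ (Fin N)))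
    (u : EuclideanSpace ℝ (Fin N) → ℝ) (p : EuclideanSpace ℝ (Fin N)) : Prop :=
  ∀ x ∈ D, ∀ y ∈ D, ‖x‖ = ‖y‖ → ⟪y, p⟫ ≤ ⟪x, p⟫ → u y ≤ u x

/-- The omega limit set of a (bounded) solution `u = u(x,t)`: all continuous
functions `z` on `B̄` which are uniform limits on `B̄` of `u(·, tₙ)` for some
sequence `tₙ → ∞`. -/
def omegaLimitSet (B : Set (EuclideanSpace ℝ (Fin N)))
    (u : EuclideanSpace ℝ (Fin N) → ℝ → ℝ) : Set (EuclideanSpace ℝ (Fin N) → ℝ) :=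
  {z | ContinuousOn z (closure B) ∧ ∃ t : ℕ → ℝ, Tendsto t atTop atTop ∧
    ∀ ε > 0, ∃ n₀ : ℕ, ∀ n ≥ n₀, ∀ x ∈ closure B, |u x (t n) - z x| ≤ ε}

open scoped Topology

/-! ### Second derivatives and Laplacians along coordinate lines -/

/-- Euclidean `N`-space. -/
abbrev Eu (N : ℕ) : Type := EuclideanSpace ℝ (Fin N)

/-- `g` is differentiable near `s` and its derivative has derivative `c` at `s`. -/
def HasSecondDerivAt (g : ℝ → ℝ) (c s : ℝ) : Prop :=
  ∃ d : ℝ → ℝ, (∀ᶠ r in 𝓝 s, HasDerivAt g (d r) r) ∧ HasDerivAt d c s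

/-- `l` is the Laplacian of `g` at `x`, computed from one-dimensional second derivatives along the
coordinate lines through `x`.  This weak form is enough for the second derivative test, and is easy
to verify for explicit barriers. -/
def HasLaplacianAt (g : Eu N → ℝ) (l : ℝ) (x : Eu N) : Prop :=
  ∃ c : Fin N → ℝ, (∀ i, HasSecondDerivAt (fun s => g (x + s • EuclideanSpace.single i 1)) (c i) 0)
    ∧ ∑ i, c i = l

/-- The heat operator `h_t - Δh` takes the value `p` at `(x, t)`. -/
def HasHeatOpAt (h : Eu N → ℝ → ℝ) (p : ℝ) (x : Eu N) (t : ℝ) : Prop :=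
  ∃ ht l, HasDerivAt (h x) ht t ∧ HasLaplacianAt (fun y => h y t) l x ∧ ht - l = p

namespace HasSecondDerivAt

variable {g h : ℝ → ℝ} {c c' s : ℝ}

lemma add (hg : HasSecondDerivAt g c s) (hh : HasSecondDerivAt h c' s) :
    HasSecondDerivAt (fun r => g r + h r) (c + c') s := by
  obtain ⟨d, hd, hc⟩ := hg
  obtain ⟨d', hd', hc'⟩ := hh
  exact ⟨fun r => d r + d' r, (hd.and hd').mono fun r hr => hr.1.add hr.2, hc.add hc'⟩

lemma const_mul (k : ℝ) (hg : HasSecondDerivAt g c s) :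
    HasSecondDerivAt (fun r => k * g r) (k * c) s := by
  obtain ⟨d, hd, hc⟩ := hg
  exact ⟨fun r => k * d r, hd.mono fun r hr => hr.const_mul k, hc.const_mul k⟩

lemma nonneg_of_isLocalMin (hg : HasSecondDerivAt g c s) (hmin : IsLocalMin g s) : 0 ≤ c := by
  obtain ⟨d, hd, hc⟩ := hg
  by_contra! hneg
  have hderiv : deriv g =ᶠ[𝓝 s] d := hd.mono fun r hr => hr.deriv
  have hmax : IsLocalMax g s := isLocalMax_of_deriv_deriv_neg
    (by rwa [hderiv.deriv_eq, hc.deriv]) hmin.deriv_eq_zero hd.self_of_nhds.continuousAt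
  have hconst : g =ᶠ[𝓝 s] fun _ => g s := by
    filter_upwards [hmin, hmax] with r h₁ h₂ using le_antisymm h₂ h₁
  have hzero : d =ᶠ[𝓝 s] fun _ => 0 := hderiv.symm.trans (by simpa using hconst.deriv)
  exact hneg.ne (hc.unique ((hasDerivAt_const s 0).congr_of_eventuallyEq hzero))

end HasSecondDerivAt

namespace HasLaplacianAt

variable {g h : Eu N → ℝ} {x : Eu N} {l m : ℝ}

lemma add (hg : HasLaplacianAt g l x) (hh : HasLaplacianAt h m x) :
    HasLaplacianAt (fun y => g y + h y) (l + m) x := by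
  obtain ⟨c, hc, rfl⟩ := hg
  obtain ⟨c', hc', rfl⟩ := hh
  exact ⟨fun i => c i + c' i, fun i => (hc i).add (hc' i), Finset.sum_add_distrib⟩

lemma const_mul (k : ℝ) (hg : HasLaplacianAt g l x) :
    HasLaplacianAt (fun y => k * g y) (k * l) x := by
  obtain ⟨c, hc, rfl⟩ := hg
  exact ⟨fun i => k * c i, fun i => (hc i).const_mul k, (Finset.mul_sum ..).symm⟩

lemma sub (hg : HasLaplacianAt g l x) (hh : HasLaplacianAt h m x) :
    HasLaplacianAt (fun y => g y - h y) (l - m) x := by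
  simpa [sub_eq_add_neg] using hg.add (hh.const_mul (-1))

lemma nonneg_of_isLocalMin (hg : HasLaplacianAt g l x) (hmin : IsLocalMin g x) : 0 ≤ l := by
  obtain ⟨c, hc, rfl⟩ := hg
  refine Finset.sum_nonneg fun i _ => (hc i).nonneg_of_isLocalMin ?_
  have hline : Tendsto (fun s : ℝ => x + s • (EuclideanSpace.single i 1 : Eu N)) (𝓝 0) (𝓝 x) :=
    (by fun_prop : Continuous _).tendsto' 0 x (by simp)
  simpa [IsLocalMin, IsMinFilter] using hline.eventually hmin

end HasLaplacianAt

namespace HasHeatOpAt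

variable {g h : Eu N → ℝ → ℝ} {x : Eu N} {p q t : ℝ}

lemma sub (hg : HasHeatOpAt g p x t) (hh : HasHeatOpAt h q x t) :
    HasHeatOpAt (fun y s => g y s - h y s) (p - q) x t := by
  obtain ⟨gt, l, hgt, hl, rfl⟩ := hg
  obtain ⟨ht, m, hht, hm, rfl⟩ := hh
  exact ⟨gt - ht, l - m, hgt.sub hht, hl.sub hm, by ring⟩

lemma const_mul (k : ℝ) (hg : HasHeatOpAt g p x t) :
    HasHeatOpAt (fun y s => k * g y s) (k * p) x t := by
  obtain ⟨gt, l, hgt, hl, rfl⟩ := hg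
  exact ⟨k * gt, k * l, hgt.const_mul k, hl.const_mul k, by ring⟩

lemma add (hg : HasHeatOpAt g p x t) (hh : HasHeatOpAt h q x t) :
    HasHeatOpAt (fun y s => g y s + h y s) (p + q) x t := by
  simpa using hg.sub (hh.const_mul (-1))

end HasHeatOpAt

/-! ### The weak maximum principle -/

lemma hasDerivAt_nonpos_of_forall_le_left {f : ℝ → ℝ} {a t f' : ℝ} (hf : HasDerivAt f f' t)
    (hat : a < t) (hmin : ∀ s ∈ Icc a t, f t ≤ f s) : f' ≤ 0 := by
  have hslope := (hasDerivWithinAt_iff_tendsto_slope' (s := Iio t) self_notMem_Iio).1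
    hf.hasDerivWithinAt
  refine le_of_tendsto hslope ?_
  filter_upwards [Ioo_mem_nhdsLT hat] with s hs
  rw [slope_def_field]
  exact div_nonpos_of_nonneg_of_nonpos (sub_nonneg.2 (hmin s ⟨hs.1.le, hs.2.le⟩))
    (sub_nonpos.2 hs.2.le)

/-- Weighting by `e^{-ct}` shifts the heat operator by `c`, which lets one choose the sign of the
zeroth order term. -/
lemma HasHeatOpAt.le_of_isMin_exp_mul {h : Eu N → ℝ → ℝ} {p c a t : ℝ} {x : Eu N} {D : Set (Eu N)}
    (hp : HasHeatOpAt h p x t) (hD : D ∈ 𝓝 x) (hat : a < t)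
    (hspace : ∀ y ∈ D, Real.exp (-c * t) * h x t ≤ Real.exp (-c * t) * h y t)
    (htime : ∀ s ∈ Icc a t, Real.exp (-c * t) * h x t ≤ Real.exp (-c * s) * h x s) :
    p ≤ c * h x t := by
  obtain ⟨ht, l, hht, hl, rfl⟩ := hp
  have hexp : 0 < Real.exp (-c * t) := Real.exp_pos _
  have hl_nonneg : 0 ≤ l := hl.nonneg_of_isLocalMin <| by
    filter_upwards [hD] with y hy using le_of_mul_le_mul_left (hspace y hy) hexp
  have hderiv : HasDerivAt (fun s => Real.exp (-c * s) * h x s)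
      (Real.exp (-c * t) * (ht - c * h x t)) t :=
    ((((hasDerivAt_id t).const_mul (-c)).exp).mul hht).congr_deriv (by simp; ring)
  have hderiv_nonpos := hasDerivAt_nonpos_of_forall_le_left hderiv hat htime
  have := nonpos_of_mul_nonpos_right hderiv_nonpos hexp
  linarith

/-- The differential inequality is required only where `h` is negative. -/
theorem weak_max_principle {K D : Set (Eu N)} (hK : IsCompact K) (hD : IsOpen D) (hDK : D ⊆ K)
    {h : Eu N → ℝ → ℝ} {a b L : ℝ}
    (hcont : ContinuousOn (fun p : Eu N × ℝ => h p.1 p.2) (K ×ˢ Icc a b))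
    (hinit : ∀ x ∈ K, 0 ≤ h x a)
    (hbdry : ∀ x ∈ K, x ∉ D → ∀ t ∈ Ioc a b, 0 ≤ h x t)
    (hpde : ∀ x ∈ D, ∀ t ∈ Ioc a b, h x t < 0 → ∃ p, L * h x t ≤ p ∧ HasHeatOpAt h p x t) :
    ∀ x ∈ K, ∀ t ∈ Icc a b, 0 ≤ h x t := by
  intro x₁ hx₁ t₁ ht₁
  by_contra! hneg
  have hweight : Continuous fun p : Eu N × ℝ => Real.exp (-(L + 1) * p.2) := by fun_prop
  obtain ⟨⟨x, t⟩, ⟨hxK, htI⟩, hmin⟩ := (hK.prod isCompact_Icc).exists_isMinOn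
    ⟨(x₁, t₁), hx₁, ht₁⟩ (hweight.continuousOn.mul hcont)
  have hle : ∀ y ∈ K, ∀ s ∈ Icc a b,
      Real.exp (-(L + 1) * t) * h x t ≤ Real.exp (-(L + 1) * s) * h y s :=
    fun y hy s hs => hmin (show (y, s) ∈ K ×ˢ Icc a b from ⟨hy, hs⟩)
  have hxt_neg : h x t < 0 := by
    by_contra! hxt
    exact absurd ((hle x₁ hx₁ t₁ ht₁).trans_lt (mul_neg_of_pos_of_neg (Real.exp_pos _) hneg))
      (not_lt.2 (mul_nonneg (Real.exp_pos _).le hxt))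
  have hat : a < t := htI.1.lt_of_ne fun hta => by
    subst hta
    exact absurd (hinit x hxK) (not_le.2 hxt_neg)
  have hxD : x ∈ D := by
    by_contra hx
    exact absurd (hbdry x hxK hx t ⟨hat, htI.2⟩) (not_le.2 hxt_neg)
  obtain ⟨p, hLp, hp⟩ := hpde x hxD t ⟨hat, htI.2⟩ hxt_neg
  have hp_le : p ≤ (L + 1) * h x t := hp.le_of_isMin_exp_mul (hD.mem_nhds hxD) hat
    (fun y hy => hle y (hDK hy) t htI) (fun s hs => hle x hxK s ⟨hs.1, hs.2.trans htI.2⟩)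
  linarith

/-! ### Laplacians of the barrier functions -/

lemma hasDerivAt_affine (a b s : ℝ) : HasDerivAt (fun r : ℝ => a + r * b) b s := by
  simpa using ((hasDerivAt_id s).mul_const b).const_add a

lemma hasSecondDerivAt_comp_affine {G G₁ G₂ : ℝ → ℝ} (hG : ∀ y, HasDerivAt G (G₁ y) y)
    (hG₁ : ∀ y, HasDerivAt G₁ (G₂ y) y) (a b s : ℝ) :
    HasSecondDerivAt (fun r => G (a + r * b)) (G₂ (a + s * b) * (b * b)) s := by
  refine ⟨fun r => G₁ (a + r * b) * b,
    .of_forall fun r => (hG _).comp r (hasDerivAt_affine a b r), ?_⟩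
  exact (((hG₁ _).comp s (hasDerivAt_affine a b s)).mul_const b).congr_deriv (by ring)

lemma hasSecondDerivAt_affine_mul_comp_quadratic {F F₁ F₂ : ℝ → ℝ}
    (hF : ∀ y, HasDerivAt F (F₁ y) y) (hF₁ : ∀ y, HasDerivAt F₁ (F₂ y) y) (a b q v : ℝ) :
    HasSecondDerivAt (fun s => (a + s * b) * F (q + 2 * s * v + s ^ 2))
      (4 * F₁ q * (v * b) + a * (4 * F₂ q) * (v * v) + a * (2 * F₁ q)) 0 := by
  have hquad (s : ℝ) : HasDerivAt (fun s : ℝ => q + 2 * s * v + s ^ 2) (2 * v + 2 * s) s :=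
    (((((hasDerivAt_id s).const_mul 2).mul_const v).const_add q).add
      ((hasDerivAt_id s).pow 2)).congr_deriv (by simp)
  have hlin : HasDerivAt (fun s : ℝ => 2 * v + 2 * s) 2 0 := by
    simpa using ((hasDerivAt_id (0 : ℝ)).const_mul 2).const_add (2 * v)
  refine ⟨fun s => b * F (q + 2 * s * v + s ^ 2) +
    (a + s * b) * (F₁ (q + 2 * s * v + s ^ 2) * (2 * v + 2 * s)),
    .of_forall fun s => (hasDerivAt_affine a b s).mul ((hF _).comp s (hquad s)), ?_⟩
  refine ((((hF _).comp 0 (hquad 0)).const_mul b).add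
    ((hasDerivAt_affine a b 0).mul (((hF₁ _).comp 0 (hquad 0)).mul hlin))).congr_deriv ?_
  simp
  ring

lemma inner_add_smul_single (e x : Eu N) (i : Fin N) (s : ℝ) :
    ⟪x + s • EuclideanSpace.single i (1 : ℝ), e⟫ = ⟪x, e⟫ + s * e i := by
  rw [inner_add_left, inner_smul_left, EuclideanSpace.inner_single_left]
  simp

lemma norm_add_smul_single_sub_sq (x ξ : Eu N) (i : Fin N) (s : ℝ) :
    ‖x + s • EuclideanSpace.single i (1 : ℝ) - ξ‖ ^ 2 =
      ‖x - ξ‖ ^ 2 + 2 * s * (x - ξ) i + s ^ 2 := by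
  rw [add_sub_right_comm, norm_add_sq_real, inner_smul_right, EuclideanSpace.inner_single_right,
    norm_smul]
  simp
  ring

lemma sum_mul_eq_inner (v w : Eu N) : ∑ i, v i * w i = ⟪v, w⟫ := by
  simp only [PiLp.inner_apply, RCLike.inner_apply, conj_trivial, mul_comm]

/-- The factor `⟪y, e⟫` turns the `N`-dimensional Laplacian of a function radial about a point of
the hyperplane `H(e)` into an `(N+2)`-dimensional one; off the hyperplane a first order term with
a sign remains. -/
lemma hasLaplacianAt_inner_mul_radial (e ξ x : Eu N) {F F₁ F₂ : ℝ → ℝ}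
    (hF : ∀ y, HasDerivAt F (F₁ y) y) (hF₁ : ∀ y, HasDerivAt F₁ (F₂ y) y) :
    HasLaplacianAt (fun y => ⟪y, e⟫ * F (‖y - ξ‖ ^ 2))
      (⟪x, e⟫ * (4 * ‖x - ξ‖ ^ 2 * F₂ (‖x - ξ‖ ^ 2) + 2 * N * F₁ (‖x - ξ‖ ^ 2))
        + 4 * ⟪x - ξ, e⟫ * F₁ (‖x - ξ‖ ^ 2)) x := by
  set q := ‖x - ξ‖ ^ 2
  refine ⟨fun i => 4 * F₁ q * ((x - ξ) i * e i) + ⟪x, e⟫ * (4 * F₂ q) * ((x - ξ) i * (x - ξ) i)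
    + ⟪x, e⟫ * (2 * F₁ q), fun i => ?_, ?_⟩
  · simp only [inner_add_smul_single, norm_add_smul_single_sub_sq]
    exact hasSecondDerivAt_affine_mul_comp_quadratic hF hF₁ _ _ _ _
  · simp only [Finset.sum_add_distrib, ← Finset.mul_sum, sum_mul_eq_inner,
      real_inner_self_eq_norm_sq, Finset.sum_const, Finset.card_univ, Fintype.card_fin,
      nsmul_eq_mul]
    ring

lemma hasLaplacianAt_comp_inner {e : Eu N} (he : ‖e‖ = 1) (x : Eu N) {G G₁ G₂ : ℝ → ℝ}
    (hG : ∀ y, HasDerivAt G (G₁ y) y) (hG₁ : ∀ y, HasDerivAt G₁ (G₂ y) y) :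
    HasLaplacianAt (fun y => G ⟪y, e⟫) (G₂ ⟪x, e⟫) x := by
  refine ⟨fun i => G₂ ⟪x, e⟫ * (e i * e i), fun i => ?_, ?_⟩
  · simp only [inner_add_smul_single]
    simpa using hasSecondDerivAt_comp_affine hG hG₁ ⟪x, e⟫ (e i) 0
  · rw [← Finset.mul_sum, sum_mul_eq_inner, real_inner_self_eq_norm_sq, he]
    ring

/-! ### Comparison on the half domain -/

section HalfDomain

/-- The closed half domain `{x ∈ B̄ : x·e ≥ 0}`, on which the maximum principle is applied. -/
def halfCl (B : Set (Eu N)) (e : Eu N) : Set (Eu N) := {x ∈ closure B | 0 ≤ ⟪x, e⟫}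

lemma halfDom_subset_halfCl (B : Set (Eu N)) (e : Eu N) : halfDom B e ⊆ halfCl B e :=
  fun _ hx => ⟨subset_closure hx.1, hx.2.le⟩

lemma isOpen_halfDom {B : Set (Eu N)} (hB : IsOpen B) (e : Eu N) : IsOpen (halfDom B e) :=
  hB.inter (isOpen_lt continuous_const (continuous_id.inner continuous_const) :
    IsOpen {x : Eu N | 0 < ⟪x, e⟫})

lemma isCompact_halfCl {B : Set (Eu N)} (hB : IsCompact (closure B)) (e : Eu N) :
    IsCompact (halfCl B e) :=
  hB.inter_right (isClosed_le continuous_const (continuous_id.inner continuous_const) :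
    IsClosed {x : Eu N | 0 ≤ ⟪x, e⟫})

lemma mem_frontier_or_inner_eq_zero {B : Set (Eu N)} (hB : IsOpen B) {e x : Eu N}
    (hx : x ∈ halfCl B e) (hx' : x ∉ halfDom B e) : x ∈ frontier B ∨ ⟪x, e⟫ = 0 := by
  by_cases h : x ∈ B
  · exact .inr (le_antisymm (not_lt.1 fun hpos => hx' ⟨h, hpos⟩) hx.2)
  · exact .inl (hB.frontier_eq ▸ ⟨hx.1, h⟩)

/-- A solution of `|w_t - Δw| ≤ L |w|` in the half domain with zero lateral boundary values.  The
reflected difference `w(x,t) = u(x,t) - u(σ_e x,t)` is of this kind. -/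
structure IsHalfDomainSolution (B : Set (Eu N)) (e : Eu N) (L : ℝ) (w : Eu N → ℝ → ℝ) :
    Prop where
  cont : ContinuousOn (fun p : Eu N × ℝ => w p.1 p.2) (halfCl B e ×ˢ Ici 0)
  bdry : ∀ x ∈ halfCl B e, x ∉ halfDom B e → ∀ t, 0 < t → w x t = 0
  pde : ∀ x ∈ halfDom B e, ∀ t, 0 < t → ∃ p, |p| ≤ L * |w x t| ∧ HasHeatOpAt w p x t

/-- A nonnegative supersolution `Ψ_t - ΔΨ ≥ LΨ` in the half domain over `[a, b]`. -/
structure IsSupersolution (B : Set (Eu N)) (e : Eu N) (L a b : ℝ) (Ψ : Eu N → ℝ → ℝ) : Prop where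
  cont : ContinuousOn (fun p : Eu N × ℝ => Ψ p.1 p.2) (halfCl B e ×ˢ Icc a b)
  nonneg : ∀ x ∈ halfCl B e, ∀ t ∈ Icc a b, 0 ≤ Ψ x t
  pde : ∀ x ∈ halfDom B e, ∀ t ∈ Ioc a b, ∃ p, L * Ψ x t ≤ p ∧ HasHeatOpAt Ψ p x t

/-- A subsolution `φ_t - Δφ ≤ -Lφ` in the half domain over `[a, b]`, nonpositive on the lateral
boundary.  The differential inequality is required only where `φ ≥ 0`, since barriers are used
through their positive parts. -/
structure IsLowerBarrier (B : Set (Eu N)) (e : Eu N) (L a b : ℝ) (φ : Eu N → ℝ → ℝ) : Prop where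
  cont : ContinuousOn (fun p : Eu N × ℝ => φ p.1 p.2) (halfCl B e ×ˢ Icc a b)
  bdry : ∀ x ∈ halfCl B e, x ∉ halfDom B e → ∀ t ∈ Ioc a b, φ x t ≤ 0
  pde : ∀ x ∈ halfDom B e, ∀ t ∈ Ioc a b, 0 ≤ φ x t → ∃ p, p ≤ -L * φ x t ∧ HasHeatOpAt φ p x t

variable {B : Set (Eu N)} {e : Eu N} {L a b : ℝ} {w φ Ψ : Eu N → ℝ → ℝ}

lemma hasHeatOpAt_zero (x : Eu N) (t : ℝ) : HasHeatOpAt (fun _ _ => 0) 0 x t :=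
  ⟨0, 0, hasDerivAt_const t 0, ⟨0, fun _ => ⟨0, .of_forall fun r => hasDerivAt_const r 0,
    hasDerivAt_const 0 0⟩, by simp⟩, sub_zero 0⟩

lemma isSupersolution_zero : IsSupersolution B e L a b fun _ _ => 0 where
  cont := continuousOn_const
  nonneg _ _ _ _ := le_rfl
  pde x _ t _ := ⟨0, by simp, hasHeatOpAt_zero x t⟩

lemma isLowerBarrier_zero : IsLowerBarrier B e L a b fun _ _ => 0 where
  cont := continuousOn_const
  bdry _ _ _ _ _ := le_rfl
  pde x _ t _ _ := ⟨0, by simp, hasHeatOpAt_zero x t⟩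

lemma IsLowerBarrier.const_mul {κ : ℝ} (hκ : 0 < κ) (hφ : IsLowerBarrier B e L a b φ) :
    IsLowerBarrier B e L a b fun x t => κ * φ x t where
  cont := continuousOn_const.mul hφ.cont
  bdry x hx hx' t ht := mul_nonpos_of_nonneg_of_nonpos hκ.le (hφ.bdry x hx hx' t ht)
  pde x hx t ht hnonneg := by
    obtain ⟨p, hp, hheat⟩ := hφ.pde x hx t ht (nonneg_of_mul_nonneg_right hnonneg hκ)
    exact ⟨κ * p, by linarith [mul_le_mul_of_nonneg_left hp hκ.le], hheat.const_mul κ⟩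

namespace IsHalfDomainSolution

lemma barrier_sub_le_of_nonneg (hBo : IsOpen B) (hBc : IsCompact (closure B)) (hL : 0 ≤ L)
    (hw : IsHalfDomainSolution B e L w) (ha : 0 ≤ a) (hΨ : IsSupersolution B e L a b Ψ)
    (hφ : IsLowerBarrier B e L a b φ)
    (hφ_nonneg : ∀ x ∈ halfDom B e, ∀ t ∈ Ioc a b, w x t + Ψ x t < φ x t → 0 ≤ φ x t)
    (hinit : ∀ x ∈ halfCl B e, φ x a - Ψ x a ≤ w x a) :
    ∀ x ∈ halfCl B e, ∀ t ∈ Icc a b, φ x t - Ψ x t ≤ w x t := by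
  have key := weak_max_principle (L := L) (h := fun x t => w x t + Ψ x t - φ x t) (a := a) (b := b)
    (isCompact_halfCl hBc e) (isOpen_halfDom hBo e) (halfDom_subset_halfCl B e) ?_ ?_ ?_ ?_
  · exact fun x hx t ht => by linarith [key x hx t ht]
  · exact ((hw.cont.mono (prod_mono_right fun t ht => ha.trans ht.1)).add hΨ.cont).sub hφ.cont
  · exact fun x hx => by linarith [hinit x hx]
  · intro x hx hx' t ht
    rw [hw.bdry x hx hx' t (ha.trans_lt ht.1)]
    linarith [hΨ.nonneg x hx t ⟨ht.1.le, ht.2⟩, hφ.bdry x hx hx' t ht]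
  · intro x hx t ht hneg
    have hφ0 := hφ_nonneg x hx t ht (sub_neg.1 hneg)
    have hΨ0 := hΨ.nonneg x (halfDom_subset_halfCl B e hx) t ⟨ht.1.le, ht.2⟩
    obtain ⟨p, hp, hwp⟩ := hw.pde x hx t (ha.trans_lt ht.1)
    obtain ⟨q, hq, hΨq⟩ := hΨ.pde x hx t ht
    obtain ⟨r, hr, hφr⟩ := hφ.pde x hx t ht hφ0
    refine ⟨p + q - r, ?_, (hwp.add hΨq).sub hφr⟩
    have hw_abs : w x t + |w x t| ≤ 2 * φ x t := by
      rcases abs_cases (w x t) with ⟨h, _⟩ | ⟨h, _⟩ <;> linarith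
    linarith [mul_le_mul_of_nonneg_left hw_abs hL, (abs_le.1 hp).1]

lemma max_barrier_sub_le (hBo : IsOpen B) (hBc : IsCompact (closure B)) (hL : 0 ≤ L)
    (hw : IsHalfDomainSolution B e L w) (ha : 0 ≤ a) (hΨ : IsSupersolution B e L a b Ψ)
    (hφ : IsLowerBarrier B e L a b φ)
    (hinit : ∀ x ∈ halfCl B e, max (φ x a) 0 - Ψ x a ≤ w x a) :
    ∀ x ∈ halfCl B e, ∀ t ∈ Icc a b, max (φ x t) 0 - Ψ x t ≤ w x t := by
  have hzero := hw.barrier_sub_le_of_nonneg hBo hBc hL ha hΨ isLowerBarrier_zero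
    (fun _ _ _ _ _ => le_rfl) fun x hx => by linarith [hinit x hx, le_max_right (φ x a) 0]
  have hbarrier := hw.barrier_sub_le_of_nonneg hBo hBc hL ha hΨ hφ
    (fun x hx t ht h => by
      linarith [hzero x (halfDom_subset_halfCl B e hx) t ⟨ht.1.le, ht.2⟩])
    fun x hx => by linarith [hinit x hx, le_max_left (φ x a) 0]
  intro x hx t ht
  rcases max_choice (φ x t) 0 with h | h <;> rw [h]
  exacts [hbarrier x hx t ht, hzero x hx t ht]

lemma nonneg_of_nonneg (hBo : IsOpen B) (hBc : IsCompact (closure B)) (hL : 0 ≤ L)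
    (hw : IsHalfDomainSolution B e L w) (ha : 0 ≤ a) (hinit : ∀ x ∈ halfCl B e, 0 ≤ w x a) :
    ∀ x ∈ halfCl B e, ∀ t, a ≤ t → 0 ≤ w x t := fun x hx t ht => by
  simpa using hw.max_barrier_sub_le hBo hBc hL ha isSupersolution_zero isLowerBarrier_zero
    (by simpa using hinit) x hx t ⟨ht, le_rfl⟩

end IsHalfDomainSolution

end HalfDomain

/-! ### The moving ball barrier -/

/-- `(x·e) (exp (α (r² - |x-ξ|²)) - 1)`: positive exactly in the part of the ball `B(ξ,r)` with
`x·e > 0`, and with linear growth away from the boundary of that set. -/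
def ballProfile (α : ℝ) (e ξ : Eu N) (r : ℝ) (x : Eu N) : ℝ :=
  ⟪x, e⟫ * (Real.exp (α * (r ^ 2 - ‖x - ξ‖ ^ 2)) - 1)

lemma ballProfile_nonpos {e x ξ : Eu N} {α r : ℝ} (hα : 0 ≤ α) (hx : 0 ≤ ⟪x, e⟫)
    (h : r ^ 2 - ‖x - ξ‖ ^ 2 ≤ 0) : ballProfile α e ξ r x ≤ 0 :=
  mul_nonpos_of_nonneg_of_nonpos hx <| sub_nonpos.2 <|
    Real.exp_le_one_iff.2 (mul_nonpos_of_nonneg_of_nonpos hα h)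

lemma gap_nonneg_of_ballProfile_nonneg {e x ξ : Eu N} {α r : ℝ} (hα : 0 < α) (hx : 0 < ⟪x, e⟫)
    (h : 0 ≤ ballProfile α e ξ r x) : 0 ≤ r ^ 2 - ‖x - ξ‖ ^ 2 :=
  nonneg_of_mul_nonneg_right
    (Real.one_le_exp_iff.1 (sub_nonneg.1 (nonneg_of_mul_nonneg_right h hx))) hα

lemma hasLaplacianAt_ballProfile (α : ℝ) (e ξ : Eu N) (r : ℝ) (x : Eu N) :
    HasLaplacianAt (ballProfile α e ξ r)
      (Real.exp (α * (r ^ 2 - ‖x - ξ‖ ^ 2)) *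
        (⟪x, e⟫ * (4 * ‖x - ξ‖ ^ 2 * α ^ 2 - 2 * N * α) - 4 * ⟪x - ξ, e⟫ * α)) x := by
  have hF (q : ℝ) : HasDerivAt (fun q => Real.exp (α * (r ^ 2 - q)) - 1)
      (Real.exp (α * (r ^ 2 - q)) * -α) q := by
    simpa using (((hasDerivAt_id q).const_sub (r ^ 2)).const_mul α).exp.sub_const 1
  have hF₁ (q : ℝ) : HasDerivAt (fun q => Real.exp (α * (r ^ 2 - q)) * -α)
      (Real.exp (α * (r ^ 2 - q)) * α ^ 2) q :=
    ((((hasDerivAt_id q).const_sub (r ^ 2)).const_mul α).exp.mul_const (-α)).congr_deriv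
      (by simp only [id]; ring)
  convert hasLaplacianAt_inner_mul_radial e ξ x hF hF₁ using 1
  · rfl
  · ring

/-- Near the boundary of the ball, where `y` is small, the term `4 Q α²` of the Laplacian wins;
inside, the exponential decay in time does. -/
lemma exp_barrier_inequality {α lam L n v y Q S ρ : ℝ} (hα : 0 < α) (hy : 0 ≤ y) (hyS : y ≤ S)
    (hQ : ρ - y ≤ Q) (hv : v + 2 * n + 4 ≤ 4 * α * ρ) (hlam : L + 4 * α * (1 + α * S) ≤ lam) :
    Real.exp (α * y) * (α * v) - lam * (Real.exp (α * y) - 1)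
      - Real.exp (α * y) * (4 * Q * α ^ 2 - (2 * n + 4) * α) ≤ -L * (Real.exp (α * y) - 1) := by
  set E := Real.exp (α * y)
  have : 0 < E := Real.exp_pos _
  have hαy : 0 ≤ α * y := by positivity
  have hE_ge : 1 + α * y ≤ E := by linarith [Real.add_one_le_exp (α * y)]
  have hdecay : 4 * α * (1 + α * S) * (E - 1) ≤ (lam - L) * (E - 1) :=
    mul_le_mul_of_nonneg_right (by linarith) (by linarith)
  have hspeed : E * α * (v + 2 * n + 4) ≤ E * α * (4 * α * ρ) := by gcongr
  have hconvex : 4 * E * α ^ 2 * (ρ - y) ≤ 4 * E * α ^ 2 * Q := by gcongr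
  have hyE : α * y * E ≤ (1 + α * S) * (E - 1) :=
    calc α * y * E ≤ (1 + α * y) * (E - 1) := by nlinarith
      _ ≤ (1 + α * S) * (E - 1) := by gcongr; linarith
  linarith [mul_le_mul_of_nonneg_left hyE (by positivity : 0 ≤ 4 * α)]

/-- A differentiable family of balls `B(ξ(τ), r(τ))`, `τ ∈ [0,1]`, not meeting `∂B`, with centers on
the side `x·e ≥ 0` of `H(e)`, speeds at most `Λ` and radii in `[ρ₀, R]`. -/
structure BallPath (B : Set (Eu N)) (e : Eu N) (R Λ ρ₀ : ℝ) where
  center : ℝ → Eu N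
  centerDeriv : ℝ → Eu N
  radius : ℝ → ℝ
  radiusDeriv : ℝ → ℝ
  hasDerivAt_center : ∀ τ ∈ Icc (0 : ℝ) 1, HasDerivAt center (centerDeriv τ) τ
  hasDerivAt_radius : ∀ τ ∈ Icc (0 : ℝ) 1, HasDerivAt radius (radiusDeriv τ) τ
  norm_centerDeriv_le : ∀ τ ∈ Icc (0 : ℝ) 1, ‖centerDeriv τ‖ ≤ Λ
  abs_radiusDeriv_le : ∀ τ ∈ Icc (0 : ℝ) 1, |radiusDeriv τ| ≤ Λ
  le_radius : ∀ τ ∈ Icc (0 : ℝ) 1, ρ₀ ≤ radius τ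
  radius_le : ∀ τ ∈ Icc (0 : ℝ) 1, radius τ ≤ R
  inner_center_nonneg : ∀ τ ∈ Icc (0 : ℝ) 1, 0 ≤ ⟪center τ, e⟫
  radius_le_norm_sub : ∀ τ ∈ Icc (0 : ℝ) 1, ∀ y ∈ frontier B, radius τ ≤ ‖y - center τ‖

namespace BallPath

variable {B : Set (Eu N)} {e : Eu N} {R Λ ρ₀ α lam L a t τ : ℝ} {x : Eu N}

/-- The profile of the ball at time `t - a`, damped by `e^{-λ(t-a)}` so as to be a subsolution. -/
def barrier (P : BallPath B e R Λ ρ₀) (α lam a : ℝ) (x : Eu N) (t : ℝ) : ℝ :=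
  Real.exp (-lam * (t - a)) * ballProfile α e (P.center (t - a)) (P.radius (t - a)) x

/-- The function `r(τ)² - |x - ξ(τ)|²`, positive exactly inside the moving ball. -/
def gap (P : BallPath B e R Λ ρ₀) (x : Eu N) (τ : ℝ) : ℝ := P.radius τ ^ 2 - ‖x - P.center τ‖ ^ 2

/-- The derivative in time of `gap`. -/
def gapDeriv (P : BallPath B e R Λ ρ₀) (x : Eu N) (τ : ℝ) : ℝ :=
  2 * P.radius τ * P.radiusDeriv τ + 2 * ⟪x - P.center τ, P.centerDeriv τ⟫

variable (P : BallPath B e R Λ ρ₀)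

lemma hasDerivAt_gap (x : Eu N) (hτ : τ ∈ Icc (0 : ℝ) 1) :
    HasDerivAt (P.gap x) (P.gapDeriv x τ) τ :=
  (((P.hasDerivAt_radius τ hτ).pow 2).sub
    ((P.hasDerivAt_center τ hτ).const_sub x).norm_sq).congr_deriv (by simp [gapDeriv])

lemma gapDeriv_le (hρ₀ : 0 < ρ₀) (hτ : τ ∈ Icc (0 : ℝ) 1) (hgap : 0 ≤ P.gap x τ) :
    P.gapDeriv x τ ≤ 4 * R * Λ := by
  have hr : 0 ≤ P.radius τ := hρ₀.le.trans (P.le_radius τ hτ)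
  have hR : 0 ≤ R := hr.trans (P.radius_le τ hτ)
  have hx : ‖x - P.center τ‖ ≤ R :=
    (le_of_sq_le_sq (sub_nonneg.1 hgap) hr).trans (P.radius_le τ hτ)
  have hcenter : ⟪x - P.center τ, P.centerDeriv τ⟫ ≤ R * Λ :=
    (real_inner_le_norm _ _).trans
      (mul_le_mul hx (P.norm_centerDeriv_le τ hτ) (norm_nonneg _) hR)
  have hradius : P.radius τ * P.radiusDeriv τ ≤ R * Λ := by
    calc P.radius τ * P.radiusDeriv τ ≤ P.radius τ * |P.radiusDeriv τ| := by
          gcongr; exact le_abs_self _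
      _ ≤ R * Λ := mul_le_mul (P.radius_le τ hτ) (P.abs_radiusDeriv_le τ hτ) (abs_nonneg _) hR
  rw [gapDeriv]
  linarith

lemma hasHeatOpAt_barrier (α lam : ℝ) (x : Eu N) (hτ : t - a ∈ Icc (0 : ℝ) 1) :
    HasHeatOpAt (P.barrier α lam a)
      (Real.exp (-lam * (t - a)) *
        (⟪x, e⟫ * (Real.exp (α * P.gap x (t - a)) * (α * P.gapDeriv x (t - a))
          - lam * (Real.exp (α * P.gap x (t - a)) - 1))
        - Real.exp (α * P.gap x (t - a)) *
          (⟪x, e⟫ * (4 * ‖x - P.center (t - a)‖ ^ 2 * α ^ 2 - 2 * N * α)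
            - 4 * ⟪x - P.center (t - a), e⟫ * α))) x t := by
  have hsub : HasDerivAt (fun t : ℝ => t - a) 1 t := (hasDerivAt_id t).sub_const a
  have hgap : HasDerivAt (fun t => P.gap x (t - a)) (P.gapDeriv x (t - a)) t :=
    (P.hasDerivAt_gap x hτ).comp_sub_const t a
  have htime := (hsub.const_mul (-lam)).exp.mul
    (((hgap.const_mul α).exp.sub_const 1).const_mul ⟪x, e⟫)
  refine ⟨_, _, htime, (hasLaplacianAt_ballProfile α e (P.center (t - a)) (P.radius (t - a))
    x).const_mul _, ?_⟩
  simp only [gap]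
  ring

lemma heatOp_barrier_le (hρ₀ : 0 < ρ₀) (hα : 0 < α)
    (hαΛ : 4 * R * Λ + 2 * N + 4 ≤ 4 * α * ρ₀ ^ 2) (hlam : L + 4 * α * (1 + α * R ^ 2) ≤ lam)
    (hτ : t - a ∈ Icc (0 : ℝ) 1) (hx : 0 < ⟪x, e⟫) (hgap : 0 ≤ P.gap x (t - a)) :
    ∃ p, p ≤ -L * P.barrier α lam a x t ∧ HasHeatOpAt (P.barrier α lam a) p x t := by
  refine ⟨_, ?_, P.hasHeatOpAt_barrier α lam x hτ⟩
  set τ := t - a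
  have hr : 0 ≤ P.radius τ := hρ₀.le.trans (P.le_radius τ hτ)
  have hgap_le : P.gap x τ ≤ R ^ 2 :=
    (sub_le_self _ (sq_nonneg _)).trans (pow_le_pow_left₀ hr (P.radius_le τ hτ) 2)
  have hnorm : ρ₀ ^ 2 - P.gap x τ ≤ ‖x - P.center τ‖ ^ 2 := by
    rw [gap]
    linarith [pow_le_pow_left₀ hρ₀.le (P.le_radius τ hτ) 2]
  have hspeed : P.gapDeriv x τ + 2 * N + 4 ≤ 4 * α * ρ₀ ^ 2 := by
    linarith [P.gapDeriv_le hρ₀ hτ hgap]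
  have hmain := mul_le_mul_of_nonneg_left
    (exp_barrier_inequality hα hgap hgap_le hnorm hspeed hlam) hx.le
  have hside : ⟪x - P.center τ, e⟫ ≤ ⟪x, e⟫ := by
    rw [inner_sub_left]
    linarith [P.inner_center_nonneg τ hτ]
  have hside' := mul_le_mul_of_nonneg_left hside
    (by positivity : 0 ≤ 4 * (Real.exp (α * P.gap x τ) * α))
  rw [barrier, ballProfile, ← gap, mul_left_comm (-L)]
  refine mul_le_mul_of_nonneg_left ?_ (Real.exp_pos _).le
  linarith

lemma continuousOn_barrier (α lam : ℝ) (s : Set (Eu N)) :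
    ContinuousOn (fun p : Eu N × ℝ => P.barrier α lam a p.1 p.2) (s ×ˢ Icc a (a + 1)) := by
  have hsub : ContinuousOn (fun p : Eu N × ℝ => p.2 - a) (s ×ˢ Icc a (a + 1)) := by fun_prop
  have hmaps : MapsTo (fun p : Eu N × ℝ => p.2 - a) (s ×ˢ Icc a (a + 1)) (Icc 0 1) :=
    fun p hp => ⟨sub_nonneg.2 hp.2.1, sub_le_iff_le_add'.2 hp.2.2⟩
  have hcenter := ContinuousOn.comp
    (fun τ hτ => (P.hasDerivAt_center τ hτ).continuousAt.continuousWithinAt) hsub hmaps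
  have hradius := ContinuousOn.comp
    (fun τ hτ => (P.hasDerivAt_radius τ hτ).continuousAt.continuousWithinAt) hsub hmaps
  have hinner : ContinuousOn (fun p : Eu N × ℝ => ⟪p.1, e⟫) (s ×ˢ Icc a (a + 1)) :=
    continuousOn_fst.inner continuousOn_const
  have hgap := (hradius.pow 2).sub ((continuousOn_fst.sub hcenter).norm.pow 2)
  exact (by fun_prop : ContinuousOn (fun p : Eu N × ℝ => Real.exp (-lam * (p.2 - a))) _).mul
    (hinner.mul ((continuousOn_const.mul hgap).rexp.sub continuousOn_const))

lemma isLowerBarrier_barrier (hBo : IsOpen B) (hρ₀ : 0 < ρ₀) (hα : 0 < α)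
    (hαΛ : 4 * R * Λ + 2 * N + 4 ≤ 4 * α * ρ₀ ^ 2) (hlam : L + 4 * α * (1 + α * R ^ 2) ≤ lam) :
    IsLowerBarrier B e L a (a + 1) (P.barrier α lam a) where
  cont := P.continuousOn_barrier α lam _
  bdry x hx hx' t ht := by
    have hτ : t - a ∈ Icc (0 : ℝ) 1 := ⟨by linarith [ht.1], by linarith [ht.2]⟩
    refine mul_nonpos_of_nonneg_of_nonpos (Real.exp_pos _).le ?_
    rcases mem_frontier_or_inner_eq_zero hBo hx hx' with h | h
    · exact ballProfile_nonpos hα.le hx.2 <| sub_nonpos.2 <|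
        pow_le_pow_left₀ (hρ₀.le.trans (P.le_radius _ hτ)) (P.radius_le_norm_sub _ hτ x h) 2
    · simp [ballProfile, h]
  pde x hx t ht hnonneg := by
    have hτ : t - a ∈ Icc (0 : ℝ) 1 := ⟨by linarith [ht.1], by linarith [ht.2]⟩
    exact P.heatOp_barrier_le hρ₀ hα hαΛ hlam hτ hx.2 <|
      gap_nonneg_of_ballProfile_nonneg hα hx.2 (nonneg_of_mul_nonneg_right hnonneg (Real.exp_pos _))

end BallPath

/-! ### Positivity after two units of time -/

section Positivity

variable {B : Set (Eu N)} {e x₀ : Eu N} {P Q : Eu N → ℝ} {g g₁ g₂ : ℝ → ℝ} {w : Eu N → ℝ → ℝ}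
  {a R Λ ρ₀ α lam κ ε L : ℝ}

/-- Nonnegative weights with `ΔP ≤ -Q` and `ΔQ = 0` in the half domain.  The weight `Q` measures a
negative part at one time and `P` the one it has become a unit of time later. -/
structure IsSuperharmonicPair (B : Set (Eu N)) (e : Eu N) (P Q : Eu N → ℝ) : Prop where
  continuous_fst : Continuous P
  continuous_snd : Continuous Q
  fst_nonneg : ∀ x ∈ halfCl B e, 0 ≤ P x
  snd_nonneg : ∀ x ∈ halfCl B e, 0 ≤ Q x
  laplacian_fst : ∀ x ∈ halfDom B e, ∃ l, l ≤ -Q x ∧ HasLaplacianAt P l x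
  laplacian_snd : ∀ x ∈ halfDom B e, HasLaplacianAt Q 0 x

lemma IsSuperharmonicPair.isSupersolution (hPQ : IsSuperharmonicPair B e P Q) (hε : 0 ≤ ε)
    (L a : ℝ) : IsSupersolution B e L a (a + 1) fun x t =>
      ε * (Real.exp (L * (t - a)) * (P x + (1 - (t - a)) * Q x)) where
  cont := by
    have := hPQ.continuous_fst
    have := hPQ.continuous_snd
    fun_prop
  nonneg x hx t ht := by
    have hP := hPQ.fst_nonneg x hx
    have hQ := hPQ.snd_nonneg x hx
    have ht' : 0 ≤ 1 - (t - a) := by linarith [ht.2]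
    positivity
  pde x hx t _ := by
    obtain ⟨l, hl, hP⟩ := hPQ.laplacian_fst x hx
    have hsub : HasDerivAt (fun t : ℝ => t - a) 1 t := (hasDerivAt_id t).sub_const a
    have htime := ((hsub.const_mul L).exp.mul
      (((hsub.const_sub 1).mul_const (Q x)).const_add (P x))).const_mul ε
    have hspace := ((hP.add ((hPQ.laplacian_snd x hx).const_mul (1 - (t - a)))).const_mul
      (Real.exp (L * (t - a)))).const_mul ε
    refine ⟨_, ?_, _, _, htime, hspace, rfl⟩
    have : 0 ≤ ε * Real.exp (L * (t - a)) := mul_nonneg hε (Real.exp_pos _).le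
    linarith [mul_le_mul_of_nonneg_left hl this]

lemma inner_le_of_mem_halfCl (hBR : B ⊆ closedBall 0 R) (he : ‖e‖ = 1) {x : Eu N}
    (hx : x ∈ halfCl B e) : ⟪x, e⟫ ≤ R := by
  have hxR : ‖x‖ ≤ R := mem_closedBall_zero_iff.1 (closure_minimal hBR isClosed_closedBall hx.1)
  simpa [he] using (real_inner_le_norm x e).trans (mul_le_mul_of_nonneg_right hxR (norm_nonneg e))

lemma isSuperharmonicPair_parabola (hBR : B ⊆ closedBall 0 R) (hR : 0 ≤ R) (he : ‖e‖ = 1) :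
    IsSuperharmonicPair B e (fun x => ⟪x, e⟫ * (2 * R - ⟪x, e⟫)) fun _ => 1 where
  continuous_fst := by fun_prop
  continuous_snd := continuous_const
  fst_nonneg x hx := mul_nonneg hx.2 (by linarith [inner_le_of_mem_halfCl hBR he hx])
  snd_nonneg _ _ := zero_le_one
  laplacian_fst x _ := by
    have hG (y : ℝ) : HasDerivAt (fun y => y * (2 * R - y)) (2 * R - 2 * y) y :=
      ((hasDerivAt_id y).mul ((hasDerivAt_id y).const_sub (2 * R))).congr_deriv
        (by simp only [id]; ring)
    have hG₁ (y : ℝ) : HasDerivAt (fun y => 2 * R - 2 * y) (-2) y := by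
      simpa using ((hasDerivAt_id y).const_mul 2).const_sub (2 * R)
    exact ⟨-2, by norm_num, hasLaplacianAt_comp_inner he x hG hG₁⟩
  laplacian_snd x _ := hasLaplacianAt_comp_inner he x (G := fun _ => 1)
    (fun y => hasDerivAt_const y 1) fun y => hasDerivAt_const y 0

/-- A nonnegative radial function `g(|x|²)` such that `Δ((x·e) g(|x|²)) ≤ -x·e` for every direction
`e`; `g₁` and `g₂` are the first two derivatives of `g`. -/
structure IsRadialWeight (B : Set (Eu N)) (g g₁ g₂ : ℝ → ℝ) : Prop where
  nonneg : ∀ x ∈ closure B, 0 ≤ g (‖x‖ ^ 2)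
  hasDerivAt : ∀ y, HasDerivAt g (g₁ y) y
  hasDerivAt₁ : ∀ y, HasDerivAt g₁ (g₂ y) y
  laplacian_le : ∀ x ∈ B, 4 * ‖x‖ ^ 2 * g₂ (‖x‖ ^ 2) + (2 * N + 4) * g₁ (‖x‖ ^ 2) ≤ -1

lemma IsRadialWeight.isSuperharmonicPair (hg : IsRadialWeight B g g₁ g₂) (he : ‖e‖ = 1) :
    IsSuperharmonicPair B e (fun x => ⟪x, e⟫ * g (‖x‖ ^ 2)) fun x => ⟪x, e⟫ where
  continuous_fst := by
    have : Continuous g := continuous_iff_continuousAt.2 fun y => (hg.hasDerivAt y).continuousAt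
    fun_prop
  continuous_snd := by fun_prop
  fst_nonneg x hx := mul_nonneg hx.2 (hg.nonneg x hx.1)
  snd_nonneg _ hx := hx.2
  laplacian_fst x hx := by
    have h := hasLaplacianAt_inner_mul_radial e 0 x hg.hasDerivAt hg.hasDerivAt₁
    simp only [sub_zero] at h
    exact ⟨_, by linarith [mul_le_mul_of_nonneg_left (hg.laplacian_le x hx.1) hx.2.le], h⟩
  laplacian_snd x _ := hasLaplacianAt_comp_inner he x (G := id) hasDerivAt_id
    fun y => hasDerivAt_const y 1

/-- The balls can be moved from a small ball around any `x₀ ∈ B` to a neighbourhood of any `x ∈ B`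
on the same side of `H(e)`, with constants independent of `x` and `e`; in the final position the
gap at `x` is controlled from below by `g(|x|²)`. -/
def SweptByBalls (B : Set (Eu N)) (R : ℝ) (g : ℝ → ℝ) : Prop :=
  ∀ x₀ ∈ B, ∀ ρ₁ > 0, ∀ a₀ > 0, ∃ ρ Λ ρ₀ c : ℝ, ρ ≤ ρ₁ ∧ 0 ≤ Λ ∧ 0 < ρ₀ ∧ 0 < c ∧
    ∀ e : Eu N, ‖e‖ = 1 → a₀ ≤ ⟪x₀, e⟫ → ∀ x ∈ B, 0 < ⟪x, e⟫ → ∃ path : BallPath B e R Λ ρ₀,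
      path.center 0 = x₀ ∧ path.radius 0 = ρ ∧ c * g (‖x‖ ^ 2) ≤ path.gap x 1

/-- The path of balls resting in the initial position of a given one. -/
def BallPath.stationary (path : BallPath B e R Λ ρ₀) (hΛ : 0 ≤ Λ) : BallPath B e R Λ ρ₀ where
  center _ := path.center 0
  centerDeriv _ := 0
  radius _ := path.radius 0
  radiusDeriv _ := 0
  hasDerivAt_center τ _ := hasDerivAt_const τ _
  hasDerivAt_radius τ _ := hasDerivAt_const τ _
  norm_centerDeriv_le _ _ := by simpa using hΛ
  abs_radiusDeriv_le _ _ := by simpa using hΛ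
  le_radius _ _ := path.le_radius 0 (by simp)
  radius_le _ _ := path.radius_le 0 (by simp)
  inner_center_nonneg _ _ := path.inner_center_nonneg 0 (by simp)
  radius_le_norm_sub _ _ := path.radius_le_norm_sub 0 (by simp)

lemma IsHalfDomainSolution.ballProfile_sub_le_add_one (hBo : IsOpen B)
    (hBc : IsCompact (closure B)) (hL : 0 ≤ L) (hw : IsHalfDomainSolution B e L w) (ha : 0 ≤ a)
    (hPQ : IsSuperharmonicPair B e P Q) (path : BallPath B e R Λ ρ₀) (hρ₀ : 0 < ρ₀) (hα : 0 < α)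
    (hαΛ : 4 * R * Λ + 2 * N + 4 ≤ 4 * α * ρ₀ ^ 2) (hlam : L + 4 * α * (1 + α * R ^ 2) ≤ lam)
    (hκ : 0 < κ) (hε : 0 ≤ ε)
    (hinit : ∀ x ∈ halfCl B e,
      max (κ * ballProfile α e (path.center 0) (path.radius 0) x) 0 - ε * (P x + Q x) ≤ w x a) :
    ∀ x ∈ halfCl B e,
      max (κ * Real.exp (-lam) * ballProfile α e (path.center 1) (path.radius 1) x) 0 -
        ε * Real.exp L * P x ≤ w x (a + 1) := fun x hx => by
  have h := hw.max_barrier_sub_le hBo hBc hL ha (hPQ.isSupersolution hε L a)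
    ((path.isLowerBarrier_barrier hBo hρ₀ hα hαΛ hlam).const_mul hκ)
    (by simpa [BallPath.barrier] using hinit) x hx (a + 1) ⟨by linarith, le_rfl⟩
  simpa [BallPath.barrier, mul_assoc] using h

lemma mul_ballProfile_le (hBR : B ⊆ closedBall 0 R) (he : ‖e‖ = 1) {ρ δ : ℝ} (hα : 0 < α)
    (hρ : 0 < ρ) (hρR : ρ ≤ R) (hδ : 0 ≤ δ) {x : Eu N} (hx : x ∈ halfCl B e) :
    δ / (R * Real.exp (α * R ^ 2)) * ballProfile α e x₀ ρ x ≤ δ := by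
  have hR := hρ.trans_le hρR
  have hexp : Real.exp (α * (ρ ^ 2 - ‖x - x₀‖ ^ 2)) ≤ Real.exp (α * R ^ 2) := by
    gcongr
    linarith [pow_le_pow_left₀ hρ.le hρR 2, sq_nonneg ‖x - x₀‖]
  have hprofile : ballProfile α e x₀ ρ x ≤ R * Real.exp (α * R ^ 2) :=
    calc ballProfile α e x₀ ρ x ≤ ⟪x, e⟫ * Real.exp (α * R ^ 2) :=
          mul_le_mul_of_nonneg_left (by linarith) hx.2
      _ ≤ R * Real.exp (α * R ^ 2) := by gcongr; exact inner_le_of_mem_halfCl hBR he hx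
  calc δ / (R * Real.exp (α * R ^ 2)) * ballProfile α e x₀ ρ x
      ≤ δ / (R * Real.exp (α * R ^ 2)) * (R * Real.exp (α * R ^ 2)) := by gcongr
    _ = δ := by field_simp

lemma max_mul_ballProfile_sub_le {ρ δ s W : ℝ} {x : Eu N} (hα : 0 ≤ α) (hκ : 0 ≤ κ)
    (hρ : 0 ≤ ρ) (hx : 0 ≤ ⟪x, e⟫) (hδ : κ * ballProfile α e x₀ ρ x ≤ δ) (hs : 0 ≤ s)
    (hlow : -s ≤ W) (hball : ‖x - x₀‖ < ρ → δ ≤ W) :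
    max (κ * ballProfile α e x₀ ρ x) 0 - s ≤ W := by
  rcases le_or_gt (ρ ^ 2 - ‖x - x₀‖ ^ 2) 0 with hout | hin
  · rw [max_eq_right (mul_nonpos_of_nonneg_of_nonpos hκ (ballProfile_nonpos hα hx hout))]
    linarith
  · have hW := hball (lt_of_pow_lt_pow_left₀ 2 hρ (sub_pos.1 hin))
    rcases max_choice (κ * ballProfile α e x₀ ρ x) 0 with h | h <;> rw [h] <;> linarith

lemma mul_inner_mul_le_ballProfile {ξ x : Eu N} {r s : ℝ} (hα : 0 ≤ α) (hx : 0 ≤ ⟪x, e⟫)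
    (hs : s ≤ r ^ 2 - ‖x - ξ‖ ^ 2) : α * (⟪x, e⟫ * s) ≤ ballProfile α e ξ r x :=
  calc α * (⟪x, e⟫ * s) = ⟪x, e⟫ * (α * s) := by ring
    _ ≤ ballProfile α e ξ r x := mul_le_mul_of_nonneg_left (by
        linarith [Real.add_one_le_exp (α * (r ^ 2 - ‖x - ξ‖ ^ 2)),
          mul_le_mul_of_nonneg_left hs hα]) hx

lemma IsHalfDomainSolution.ballProfile_sub_le_add_two (hBo : IsOpen B) (hBR : B ⊆ closedBall 0 R)
    (hg : IsRadialWeight B g g₁ g₂) (he : ‖e‖ = 1) (hL : 0 ≤ L)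
    (hw : IsHalfDomainSolution B e L w) (ha : 0 ≤ a) (path : BallPath B e R Λ ρ₀)
    (hΛ : 0 ≤ Λ) (hρ₀ : 0 < ρ₀) (hα : 0 < α) (hαΛ : 4 * R * Λ + 2 * N + 4 ≤ 4 * α * ρ₀ ^ 2)
    (hlam : L + 4 * α * (1 + α * R ^ 2) ≤ lam) {δ : ℝ} (hδ : 0 < δ) (hε : 0 ≤ ε)
    (hlow : ∀ x ∈ halfCl B e, -ε ≤ w x a)
    (hball : ∀ x ∈ halfCl B e, ‖x - path.center 0‖ < path.radius 0 → δ ≤ w x a) :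
    ∀ x ∈ halfCl B e, δ / (R * Real.exp (α * R ^ 2)) * Real.exp (-lam) * Real.exp (-lam) *
        ballProfile α e (path.center 1) (path.radius 1) x -
      ε * Real.exp L * (2 * R) * Real.exp L * (⟪x, e⟫ * g (‖x‖ ^ 2)) ≤ w x (a + 2) := by
  have hρ : 0 < path.radius 0 := hρ₀.trans_le (path.le_radius 0 (by simp))
  have hρR : path.radius 0 ≤ R := path.radius_le 0 (by simp)
  have hR : 0 < R := hρ.trans_le hρR
  have hκ : 0 < δ / (R * Real.exp (α * R ^ 2)) := by positivity
  have hBc : IsCompact (closure B) := (isCompact_closedBall 0 R).closure_of_subset hBR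
  have hparabola := isSuperharmonicPair_parabola hBR hR.le he
  have hweight := hg.isSuperharmonicPair he
  have hfirst := hw.ballProfile_sub_le_add_one hBo hBc hL ha hparabola (path.stationary hΛ) hρ₀ hα
    hαΛ hlam hκ hε fun x hx => by
      have hP := mul_nonneg hε (hparabola.fst_nonneg x hx)
      exact max_mul_ballProfile_sub_le hα.le hκ.le hρ.le hx.2
        (mul_ballProfile_le hBR he hα hρ hρR hδ.le hx) (by linarith) (by linarith [hlow x hx])
        (hball x hx)
  have hsecond := hw.ballProfile_sub_le_add_one hBo hBc hL (by linarith : 0 ≤ a + 1) hweight path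
    hρ₀ hα hαΛ hlam (mul_pos hκ (Real.exp_pos (-lam)))
    (by positivity : 0 ≤ ε * Real.exp L * (2 * R)) fun x hx => by
      refine (sub_le_sub_left ?_ _).trans (hfirst x hx)
      rw [mul_assoc _ (2 * R)]
      refine mul_le_mul_of_nonneg_left ?_ (mul_nonneg hε (Real.exp_pos L).le)
      linarith [sq_nonneg ⟪x, e⟫, mul_nonneg hR.le (hweight.fst_nonneg x hx)]
  intro x hx
  have h := hsecond x hx
  rw [show a + 1 + 1 = a + 2 by ring] at h
  exact (sub_le_sub_right (le_max_left _ _) _).trans h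

/-- The final bounds from below and from above are both multiples of `(x·e) g(|x|²)`, so a small
`ε` makes the barrier win everywhere in the half domain. -/
lemma SweptByBalls.exists_nonneg_add_two (hswept : SweptByBalls B R g) (hBo : IsOpen B)
    (hBR : B ⊆ closedBall 0 R) (hR : 0 < R) (hg : IsRadialWeight B g g₁ g₂) (hx₀ : x₀ ∈ B)
    {ρ₁ a₀ δ : ℝ} (hρ₁ : 0 < ρ₁) (ha₀ : 0 < a₀) (hδ : 0 < δ) (hL : 0 ≤ L) :
    ∃ ε > 0, ∀ e : Eu N, ‖e‖ = 1 → a₀ ≤ ⟪x₀, e⟫ → ∀ w, IsHalfDomainSolution B e L w →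
      ∀ a, 0 ≤ a → (∀ x ∈ halfCl B e, -ε ≤ w x a) →
      (∀ x ∈ halfCl B e, ‖x - x₀‖ < ρ₁ → δ ≤ w x a) → ∀ x ∈ halfCl B e, 0 ≤ w x (a + 2) := by
  obtain ⟨ρ, Λ, ρ₀, c, hρρ₁, hΛ, hρ₀, hc, hpath⟩ := hswept x₀ hx₀ ρ₁ hρ₁ a₀ ha₀
  obtain ⟨α, hα, hαΛ⟩ : ∃ α : ℝ, 0 < α ∧ 4 * R * Λ + 2 * N + 4 ≤ 4 * α * ρ₀ ^ 2 :=
    ⟨(4 * R * Λ + 2 * N + 4) / (4 * ρ₀ ^ 2), by positivity, le_of_eq (by field_simp)⟩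
  set lam := L + 4 * α * (1 + α * R ^ 2)
  set k := δ / (R * Real.exp (α * R ^ 2)) * Real.exp (-lam) * Real.exp (-lam)
  have hk : 0 < k := by positivity
  refine ⟨k * (α * c) / (Real.exp L * (2 * R) * Real.exp L), by positivity,
    fun e he hex w hw a ha hlow hball x hx => ?_⟩
  by_cases hxD : x ∈ halfDom B e
  swap
  · exact (hw.bdry x hx hxD (a + 2) (by linarith)).ge
  obtain ⟨path, hcenter, hradius, hgap⟩ := hpath e he hex x hxD.1 hxD.2
  have hbelow := hw.ballProfile_sub_le_add_two hBo hBR hg he hL ha path hΛ hρ₀ hα hαΛ le_rfl hδ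
    (by positivity) hlow (fun y hy hyx => hball y hy (by
      rw [hcenter, hradius] at hyx
      exact hyx.trans_le hρρ₁)) x hx
  refine le_trans (sub_nonneg.2 ?_) hbelow
  calc k * (α * c) / (Real.exp L * (2 * R) * Real.exp L) * Real.exp L * (2 * R) * Real.exp L *
        (⟪x, e⟫ * g (‖x‖ ^ 2)) = k * (α * (⟪x, e⟫ * (c * g (‖x‖ ^ 2)))) := by field_simp
    _ ≤ k * ballProfile α e (path.center 1) (path.radius 1) x :=
        mul_le_mul_of_nonneg_left (mul_inner_mul_le_ballProfile hα.le hx.2 hgap) hk.le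

end Positivity

/-! ### Radial weights and ball paths in balls and annuli -/

section RadialDomains

open AffineMap NormedSpace

variable {e x₀ : Eu N} {r R ρ : ℝ}

lemma isRadialWeight_ball (R : ℝ) : IsRadialWeight (ball (0 : Eu N) R)
    (fun y => (R ^ 2 - y) / (2 * N + 4)) (fun _ => -1 / (2 * N + 4)) fun _ => 0 where
  nonneg x hx := by
    have : ‖x‖ ≤ R := mem_closedBall_zero_iff.1 (closure_ball_subset_closedBall hx)
    exact div_nonneg (sub_nonneg.2 (by gcongr)) (by positivity)
  hasDerivAt y := by
    simpa using ((hasDerivAt_id y).const_sub (R ^ 2)).div_const (2 * N + 4 : ℝ)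
  hasDerivAt₁ y := hasDerivAt_const y _
  laplacian_le x _ := le_of_eq (by field_simp; ring)

/-- Balls moving from `x₀` straight to the origin while growing to the whole domain. -/
def ballPathToOrigin (hx₀ : ‖x₀‖ ≤ R) (hρ : ρ ≤ R - ‖x₀‖) (hρ₀ : 0 ≤ ρ) (hinner : 0 ≤ ⟪x₀, e⟫) :
    BallPath (ball 0 R) e R R ρ where
  center := lineMap x₀ 0
  centerDeriv _ := 0 - x₀
  radius := lineMap ρ R
  radiusDeriv _ := R - ρ
  hasDerivAt_center _ _ := hasDerivAt_lineMap
  hasDerivAt_radius _ _ := hasDerivAt_lineMap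
  norm_centerDeriv_le _ _ := by simpa using hx₀
  abs_radiusDeriv_le _ _ := abs_le.2 ⟨by linarith [norm_nonneg x₀], by linarith⟩
  le_radius τ hτ := ((convex_Ici ρ).lineMap_mem self_mem_Ici
    (show ρ ≤ R by linarith [norm_nonneg x₀]) hτ)
  radius_le τ hτ := ((convex_Iic R).lineMap_mem (show ρ ≤ R by linarith [norm_nonneg x₀])
    self_mem_Iic hτ)
  inner_center_nonneg τ hτ := by
    simpa [lineMap_apply_module, inner_smul_left] using
      mul_nonneg (sub_nonneg.2 hτ.2) hinner
  radius_le_norm_sub τ hτ y hy := by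
    have hyR : R ≤ ‖y‖ := by
      rw [isOpen_ball.frontier_eq] at hy
      simpa using hy.2
    have hcenter : ‖lineMap x₀ (0 : Eu N) τ‖ = (1 - τ) * ‖x₀‖ := by
      simp [lineMap_apply_module, norm_smul, abs_of_nonneg (sub_nonneg.2 hτ.2)]
    have hradius : lineMap ρ R τ ≤ R - (1 - τ) * ‖x₀‖ := by
      rw [lineMap_apply_module]
      simp only [smul_eq_mul]
      linarith [mul_le_mul_of_nonneg_left hρ (sub_nonneg.2 hτ.2)]
    linarith [norm_sub_norm_le y (lineMap x₀ (0 : Eu N) τ)]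

lemma sweptByBalls_ball (R : ℝ) :
    SweptByBalls (ball (0 : Eu N) R) R fun y => (R ^ 2 - y) / (2 * N + 4) := by
  intro x₀ hx₀ ρ₁ hρ₁ a₀ ha₀
  rw [mem_ball_zero_iff] at hx₀
  have hρ : 0 < min ρ₁ (R - ‖x₀‖) := lt_min hρ₁ (sub_pos.2 hx₀)
  refine ⟨min ρ₁ (R - ‖x₀‖), R, min ρ₁ (R - ‖x₀‖), 2 * N + 4, min_le_left _ _,
    (norm_nonneg x₀).trans hx₀.le, hρ, by positivity, fun e _ hex x _ _ =>
    ⟨ballPathToOrigin hx₀.le (min_le_right _ _) hρ.le (ha₀.le.trans hex), ?_, ?_, ?_⟩⟩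
  · simp [ballPathToOrigin]
  · simp [ballPathToOrigin]
  · simpa [ballPathToOrigin, BallPath.gap] using (mul_div_cancel₀ _ (by positivity)).le

lemma exists_hasDerivAt_norm {γ : ℝ → Eu N} {γ' : Eu N} {τ : ℝ} (hγ : HasDerivAt γ γ' τ)
    (h0 : γ τ ≠ 0) : ∃ k, HasDerivAt (fun s => ‖γ s‖) k τ ∧ |k| ≤ ‖γ'‖ := by
  have hpos := norm_pos_iff.2 h0
  have h := hγ.norm_sq.sqrt (pow_pos hpos 2).ne'
  simp only [Real.sqrt_sq (norm_nonneg _)] at h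
  refine ⟨_, h, ?_⟩
  rw [mul_div_mul_left _ _ two_ne_zero, abs_div, abs_norm, div_le_iff₀ hpos, mul_comm]
  exact abs_real_inner_le_norm _ _

lemma exists_hasDerivAt_normalize {γ : ℝ → Eu N} {γ' : Eu N} {τ : ℝ} (hγ : HasDerivAt γ γ' τ)
    (h0 : γ τ ≠ 0) :
    ∃ v, HasDerivAt (fun s => normalize (γ s)) v τ ∧ ‖v‖ ≤ 2 * ‖γ'‖ / ‖γ τ‖ := by
  have hpos := norm_pos_iff.2 h0
  obtain ⟨k, hk, hk_le⟩ := exists_hasDerivAt_norm hγ h0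
  refine ⟨_, (hk.inv hpos.ne').smul hγ, ?_⟩
  calc ‖(‖γ τ‖⁻¹) • γ' + (-k / ‖γ τ‖ ^ 2) • γ τ‖
      ≤ ‖γ τ‖⁻¹ * ‖γ'‖ + |k| / ‖γ τ‖ ^ 2 * ‖γ τ‖ := by
        refine (norm_add_le _ _).trans_eq ?_
        simp [norm_smul]
    _ ≤ ‖γ τ‖⁻¹ * ‖γ'‖ + ‖γ'‖ / ‖γ τ‖ ^ 2 * ‖γ τ‖ := by gcongr
    _ = 2 * ‖γ'‖ / ‖γ τ‖ := by field_simp; ring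

/-- Two unit vectors in the closed half space `y·e ≥ 0`, one of them not on the boundary, are far
from being antipodal. -/
lemma le_norm_lineMap {p q : Eu N} (hp : ‖p‖ = 1) (hq : ‖q‖ = 1) (he : ‖e‖ = 1) {b : ℝ}
    (hb₀ : 0 ≤ b) (hb₁ : b ≤ 1) (hpb : b ≤ ⟪p, e⟫) (hqe : 0 ≤ ⟪q, e⟫) {τ : ℝ}
    (hτ : τ ∈ Icc (0 : ℝ) 1) : b / 4 ≤ ‖lineMap p q τ‖ := by
  have hτ' : 0 ≤ 1 - τ := sub_nonneg.2 hτ.2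
  rw [lineMap_apply_module]
  rcases le_total τ (3 / 4) with h | h
  · have hinner : (1 - τ) * b ≤ ‖(1 - τ) • p + τ • q‖ :=
      calc (1 - τ) * b ≤ (1 - τ) * ⟪p, e⟫ + τ * ⟪q, e⟫ :=
            le_add_of_le_of_nonneg (by gcongr) (mul_nonneg hτ.1 hqe)
        _ = ⟪(1 - τ) • p + τ • q, e⟫ := by simp [inner_add_left, inner_smul_left]
        _ ≤ ‖(1 - τ) • p + τ • q‖ := by simpa [he] using real_inner_le_norm _ e
    linarith [mul_le_mul_of_nonneg_right (by linarith : 1 / 4 ≤ 1 - τ) hb₀]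
  · have hnorm := norm_sub_le ((1 - τ) • p + τ • q) ((1 - τ) • p)
    rw [add_sub_cancel_left, norm_smul, norm_smul, hp, hq, Real.norm_of_nonneg hτ.1,
      Real.norm_of_nonneg hτ'] at hnorm
    linarith

/-- The open annulus centered at the origin. -/
def annulus (N : ℕ) (r R : ℝ) : Set (Eu N) := {x | r < ‖x‖ ∧ ‖x‖ < R}

lemma isOpen_annulus (r R : ℝ) : IsOpen (annulus N r R) :=
  (isOpen_lt continuous_const continuous_norm).inter (isOpen_lt continuous_norm continuous_const)

lemma norm_mem_Icc_of_mem_closure_annulus {x : Eu N} (hx : x ∈ closure (annulus N r R)) :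
    ‖x‖ ∈ Icc r R :=
  closure_minimal (t := norm ⁻¹' Icc r R) (fun _ hy => ⟨hy.1.le, hy.2.le⟩)
    (isClosed_Icc.preimage continuous_norm) hx

lemma norm_eq_or_eq_of_mem_frontier_annulus {x : Eu N} (hx : x ∈ frontier (annulus N r R)) :
    ‖x‖ = r ∨ ‖x‖ = R := by
  rw [(isOpen_annulus r R).frontier_eq] at hx
  obtain ⟨hrx, hxR⟩ := norm_mem_Icc_of_mem_closure_annulus hx.1
  by_contra! h
  exact hx.2 ⟨hrx.lt_of_ne' h.1, hxR.lt_of_ne h.2⟩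

/-- The concave function of `z ∈ [0, S]` which vanishes at both ends and has second derivative
`-m² e^{-mz}`. -/
def expBump (m S z : ℝ) : ℝ := (1 - Real.exp (-m * z)) - (1 - Real.exp (-m * S)) / S * z

lemma expBump_nonneg {m S z : ℝ} (hS : 0 < S) (hz : z ∈ Icc 0 S) : 0 ≤ expBump m S z := by
  have h := convexOn_exp.2 (mem_univ (0 : ℝ)) (mem_univ (-m * S))
    (sub_nonneg.2 ((div_le_one hS).2 hz.2)) (div_nonneg hz.1 hS.le) (sub_add_cancel 1 (z / S))
  simp only [smul_eq_mul, mul_zero, zero_add, Real.exp_zero, mul_one] at h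
  rw [show z / S * (-m * S) = -m * z by field_simp] at h
  rw [expBump, div_mul_eq_mul_div, mul_div_assoc]
  linarith

/-- A concave function vanishing at both ends is bounded by its slopes there. -/
lemma mul_expBump_le {m S z : ℝ} (hm : 0 ≤ m) (hS : 0 < S) (hz : z ∈ Icc 0 S) :
    S * expBump m S z ≤ ((1 - Real.exp (-m * S)) / S + m) * (z * (S - z)) := by
  set β := (1 - Real.exp (-m * S)) / S
  have hβ : 0 ≤ β := div_nonneg (by simp [hm, hS.le, mul_nonneg]) hS.le
  have hleft : expBump m S z ≤ m * z := by
    rw [expBump]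
    linarith [Real.add_one_le_exp (-m * z), mul_nonneg hβ hz.1]
  have hright : expBump m S z ≤ β * (S - z) := by
    have hβS : β * S = 1 - Real.exp (-m * S) := div_mul_cancel₀ _ hS.ne'
    have : Real.exp (-m * S) ≤ Real.exp (-m * z) :=
      Real.exp_le_exp.2 (mul_le_mul_of_nonpos_left hz.2 (neg_nonpos.2 hm))
    rw [expBump, mul_sub, hβS]
    linarith
  linarith [mul_le_mul_of_nonneg_left hleft (sub_nonneg.2 hz.2),
    mul_le_mul_of_nonneg_left hright hz.1]

lemma mul_expBump_sq_sub_sq_le {m s : ℝ} (hm : 0 ≤ m) (hr : 0 ≤ r) (hrR : r < R)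
    (hs : s ∈ Icc r R) :
    (R ^ 2 - r ^ 2) * expBump m (R ^ 2 - r ^ 2) (s ^ 2 - r ^ 2) ≤
      ((1 - Real.exp (-m * (R ^ 2 - r ^ 2))) / (R ^ 2 - r ^ 2) + m) * (4 * R ^ 2) *
        ((R - s) * (s - r)) := by
  have hS : 0 < R ^ 2 - r ^ 2 := sub_pos.2 (pow_lt_pow_left₀ hrR hr two_ne_zero)
  have hs₀ : 0 ≤ s := hr.trans hs.1
  have hz : s ^ 2 - r ^ 2 ∈ Icc 0 (R ^ 2 - r ^ 2) :=
    ⟨sub_nonneg.2 (pow_le_pow_left₀ hr hs.1 2),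
      sub_le_sub_right (pow_le_pow_left₀ hs₀ hs.2 2) _⟩
  refine (mul_expBump_le hm hS hz).trans ?_
  rw [mul_assoc]
  refine mul_le_mul_of_nonneg_left ?_
    (add_nonneg (div_nonneg (by simpa using mul_nonneg hm hS.le) hS.le) hm)
  have hfactors : (s + r) * (R + s) ≤ (2 * R) * (2 * R) := by
    apply mul_le_mul <;> linarith [hs.1, hs.2]
  calc (s ^ 2 - r ^ 2) * (R ^ 2 - r ^ 2 - (s ^ 2 - r ^ 2))
      = (s + r) * (R + s) * ((R - s) * (s - r)) := by ring
    _ ≤ (2 * R) * (2 * R) * ((R - s) * (s - r)) :=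
        mul_le_mul_of_nonneg_right hfactors (mul_nonneg (sub_nonneg.2 hs.2) (sub_nonneg.2 hs.1))
    _ = 4 * R ^ 2 * ((R - s) * (s - r)) := by ring

lemma hasDerivAt_exp_neg_mul_sub (m s y : ℝ) : HasDerivAt (fun y => Real.exp (-m * (y - s)))
    (Real.exp (-m * (y - s)) * -m) y := by
  simpa using (((hasDerivAt_id y).sub_const s).const_mul (-m)).exp

lemma exists_isRadialWeight_annulus (hr : 0 < r) (hrR : r < R) :
    ∃ g g₁ g₂ : ℝ → ℝ, ∃ c > 0, IsRadialWeight (annulus N r R) g g₁ g₂ ∧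
      ∀ x ∈ annulus N r R, c * g (‖x‖ ^ 2) ≤ (R - ‖x‖) * (‖x‖ - r) := by
  have hR : 0 < R := hr.trans hrR
  set S := R ^ 2 - r ^ 2
  have hS : 0 < S := sub_pos.2 (pow_lt_pow_left₀ hrR hr.le two_ne_zero)
  set m : ℝ := (N + 2) / (2 * r ^ 2)
  have hm : 0 < m := by positivity
  set β := (1 - Real.exp (-m * S)) / S
  have hβ : 0 < β := div_pos (by simp [hm, hS]) hS
  set k := 1 / (β * (2 * N + 4)) with hk_def
  have hk : 0 < k := by positivity
  have hmem {x : Eu N} (hx : x ∈ closure (annulus N r R)) : ‖x‖ ^ 2 - r ^ 2 ∈ Icc 0 S := by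
    obtain ⟨hrx, hxR⟩ := norm_mem_Icc_of_mem_closure_annulus hx
    exact ⟨sub_nonneg.2 (by gcongr), sub_le_sub_right (by gcongr) _⟩
  refine ⟨fun y => k * expBump m S (y - r ^ 2),
    fun y => k * (m * Real.exp (-m * (y - r ^ 2)) - β),
    fun y => k * (-m ^ 2 * Real.exp (-m * (y - r ^ 2))), S / (k * (β + m) * (4 * R ^ 2)),
    by positivity, ⟨?_, ?_, ?_, ?_⟩, ?_⟩
  · exact fun x hx => mul_nonneg hk.le (expBump_nonneg hS (hmem hx))
  · exact fun y => ((((hasDerivAt_exp_neg_mul_sub m (r ^ 2) y).const_sub 1).sub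
      (((hasDerivAt_id y).sub_const (r ^ 2)).const_mul β)).const_mul k).congr_deriv (by ring)
  · exact fun y => ((((hasDerivAt_exp_neg_mul_sub m (r ^ 2) y).const_mul m).sub_const
      β).const_mul k).congr_deriv (by ring)
  · intro x hx
    set E := Real.exp (-m * (‖x‖ ^ 2 - r ^ 2))
    have : 0 < E := Real.exp_pos _
    have hkβ : k * β * (2 * N + 4) = 1 := by rw [hk_def]; field_simp
    have hm_large : 2 * N + 4 ≤ 4 * ‖x‖ ^ 2 * m :=
      calc (2 * N + 4 : ℝ) = 4 * r ^ 2 * m := by simp only [m]; field_simp; ring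
        _ ≤ 4 * ‖x‖ ^ 2 * m := by have := hx.1; gcongr
    linarith [mul_le_mul_of_nonneg_left hm_large (by positivity : 0 ≤ k * m * E)]
  · intro x hx
    rw [div_mul_eq_mul_div, div_le_iff₀ (by positivity)]
    linarith [mul_le_mul_of_nonneg_left
      (mul_expBump_sq_sub_sq_le hm.le hr.le hrR ⟨hx.1.le, hx.2.le⟩) hk.le]

lemma lineMap_middle_mem_Icc {d τ : ℝ} (hd : d ∈ Icc r R) (hτ : τ ∈ Icc (0 : ℝ) 1) :
    lineMap d ((R + r) / 2) τ ∈ Icc r R :=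
  (convex_Icc r R).lineMap_mem hd ⟨by linarith [hd.1, hd.2], by linarith [hd.1, hd.2]⟩ hτ

/-- Balls moving in an annulus towards the middle sphere `|y| = (r+R)/2`, along which the direction
of the center is prescribed, while growing to the full width of the annulus. -/
def annulusBallPath (hr : 0 ≤ r) {d V : ℝ} (hd : d ∈ Icc r R) (hρ : 0 ≤ ρ)
    (hρr : ρ ≤ d - r) (hρR : ρ ≤ R - d) (hV : 0 ≤ V) (dir dirDeriv : ℝ → Eu N)
    (hdir : ∀ τ ∈ Icc (0 : ℝ) 1, HasDerivAt dir (dirDeriv τ) τ)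
    (hnorm : ∀ τ ∈ Icc (0 : ℝ) 1, ‖dir τ‖ = 1) (hspeed : ∀ τ ∈ Icc (0 : ℝ) 1, ‖dirDeriv τ‖ ≤ V)
    (hinner : ∀ τ ∈ Icc (0 : ℝ) 1, 0 ≤ ⟪dir τ, e⟫) :
    BallPath (annulus N r R) e R (R + R * V) ρ where
  center τ := (lineMap d ((R + r) / 2) τ : ℝ) • dir τ
  centerDeriv τ := (lineMap d ((R + r) / 2) τ : ℝ) • dirDeriv τ + ((R + r) / 2 - d) • dir τ
  radius := lineMap ρ ((R - r) / 2)
  radiusDeriv _ := (R - r) / 2 - ρ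
  hasDerivAt_center τ hτ := (hasDerivAt_lineMap (a := d) (b := (R + r) / 2)).smul (hdir τ hτ)
  hasDerivAt_radius τ _ := hasDerivAt_lineMap
  norm_centerDeriv_le τ hτ := by
    refine (norm_add_le _ _).trans ?_
    rw [norm_smul, norm_smul, hnorm τ hτ, mul_one, add_comm]
    refine add_le_add (abs_le.2 ⟨by linarith, by linarith⟩) ?_
    rw [Real.norm_of_nonneg (hr.trans (lineMap_middle_mem_Icc hd hτ).1)]
    exact mul_le_mul (lineMap_middle_mem_Icc hd hτ).2 (hspeed τ hτ) (norm_nonneg _) (by linarith)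
  abs_radiusDeriv_le τ _ := by
    have : 0 ≤ R * V := mul_nonneg (by linarith) hV
    exact abs_le.2 ⟨by linarith, by linarith⟩
  le_radius τ hτ := (convex_Ici ρ).lineMap_mem self_mem_Ici
    (show ρ ≤ (R - r) / 2 by linarith) hτ
  radius_le τ hτ := (convex_Iic R).lineMap_mem (show ρ ≤ R by linarith)
    (show (R - r) / 2 ≤ R by linarith) hτ
  inner_center_nonneg τ hτ := by
    rw [inner_smul_left]
    exact mul_nonneg (hr.trans (lineMap_middle_mem_Icc hd hτ).1) (hinner τ hτ)
  radius_le_norm_sub τ hτ y hy := by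
    have houter := norm_sub_norm_le y ((lineMap d ((R + r) / 2) τ : ℝ) • dir τ)
    have hinner := norm_sub_norm_le ((lineMap d ((R + r) / 2) τ : ℝ) • dir τ) y
    rw [norm_sub_rev] at hinner
    rw [norm_smul, hnorm τ hτ, mul_one,
      Real.norm_of_nonneg (hr.trans (lineMap_middle_mem_Icc hd hτ).1)] at houter hinner
    have hτ' := sub_nonneg.2 hτ.2
    simp only [lineMap_apply_module, smul_eq_mul] at houter hinner ⊢
    rcases norm_eq_or_eq_of_mem_frontier_annulus hy with h | h <;> rw [h] at houter hinner
    · linarith [mul_le_mul_of_nonneg_left hρr hτ']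
    · linarith [mul_le_mul_of_nonneg_left hρR hτ']

lemma inner_normalize_lineMap_nonneg {p q : Eu N} (hp : 0 ≤ ⟪p, e⟫) (hq : 0 ≤ ⟪q, e⟫) {τ : ℝ}
    (hτ : τ ∈ Icc (0 : ℝ) 1) : 0 ≤ ⟪normalize (lineMap p q τ), e⟫ := by
  rw [NormedSpace.normalize, inner_smul_left, lineMap_apply_module, inner_add_left, inner_smul_left,
    inner_smul_left]
  exact mul_nonneg (inv_nonneg.2 (norm_nonneg _))
    (add_nonneg (mul_nonneg (sub_nonneg.2 hτ.2) hp) (mul_nonneg hτ.1 hq))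

lemma exists_hasDerivAt_normalize_lineMap {p q : Eu N} (hp : ‖p‖ = 1) (hq : ‖q‖ = 1)
    (he : ‖e‖ = 1) {b : ℝ} (hb₀ : 0 < b) (hb₁ : b ≤ 1) (hpb : b ≤ ⟪p, e⟫) (hqe : 0 ≤ ⟪q, e⟫) :
    ∃ v : ℝ → Eu N, ∀ τ ∈ Icc (0 : ℝ) 1,
      HasDerivAt (fun s => normalize (lineMap p q s)) (v τ) τ ∧ ‖v τ‖ ≤ 16 / b := by
  have hex (τ : ℝ) (hτ : τ ∈ Icc (0 : ℝ) 1) :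
      ∃ v, HasDerivAt (fun s => normalize (lineMap p q s)) v τ ∧ ‖v‖ ≤ 16 / b := by
    have hlower := le_norm_lineMap hp hq he hb₀.le hb₁ hpb hqe hτ
    have hpos : 0 < b / 4 := by positivity
    obtain ⟨v, hv, hv_le⟩ := exists_hasDerivAt_normalize
      (hasDerivAt_lineMap (a := p) (b := q) (x := τ)) (norm_pos_iff.1 (hpos.trans_le hlower))
    refine ⟨v, hv, hv_le.trans ?_⟩
    have hqp : ‖q - p‖ ≤ 2 := (norm_sub_le q p).trans (by rw [hp, hq]; norm_num)
    calc 2 * ‖q - p‖ / ‖lineMap p q τ‖ ≤ 2 * 2 / (b / 4) := by gcongr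
      _ = 16 / b := by ring
  choose! v hv using hex
  exact ⟨v, hv⟩

lemma exists_annulusBallPath (hr : 0 < r) {ρ a₀ : ℝ} (hx₀ : x₀ ∈ annulus N r R) (hρ : 0 ≤ ρ)
    (hρr : ρ ≤ ‖x₀‖ - r) (hρR : ρ ≤ R - ‖x₀‖) (ha₀ : 0 < a₀) (he : ‖e‖ = 1)
    (hex₀ : a₀ ≤ ⟪x₀, e⟫) {x : Eu N} (hx : x ∈ annulus N r R) (hxe : 0 ≤ ⟪x, e⟫) :
    ∃ path : BallPath (annulus N r R) e R (R + R * (16 / min (a₀ / R) 1)) ρ,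
      path.center 0 = x₀ ∧ path.radius 0 = ρ ∧ path.gap x 1 = (R - ‖x‖) * (‖x‖ - r) := by
  have hR : 0 < R := hr.trans (hx.1.trans hx.2)
  have hp : ‖normalize x₀‖ = 1 :=
    norm_normalize_eq_one_iff.2 (norm_pos_iff.1 (hr.trans hx₀.1))
  have hq : ‖normalize x‖ = 1 := norm_normalize_eq_one_iff.2 (norm_pos_iff.1 (hr.trans hx.1))
  have hb : 0 < min (a₀ / R) 1 := lt_min (by positivity) one_pos
  have hpe : min (a₀ / R) 1 ≤ ⟪normalize x₀, e⟫ := by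
    rw [NormedSpace.normalize, inner_smul_left, conj_trivial, inv_mul_eq_div]
    exact (min_le_left _ _).trans
      (div_le_div₀ (ha₀.le.trans hex₀) hex₀ (hr.trans hx₀.1) hx₀.2.le)
  have hqe : 0 ≤ ⟪normalize x, e⟫ := by
    rw [NormedSpace.normalize, inner_smul_left]
    exact mul_nonneg (inv_nonneg.2 (norm_nonneg x)) hxe
  obtain ⟨v, hv⟩ := exists_hasDerivAt_normalize_lineMap hp hq he hb (min_le_right _ _) hpe hqe
  have hne (τ : ℝ) (hτ : τ ∈ Icc (0 : ℝ) 1) :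
      lineMap (normalize x₀) (normalize x) τ ≠ (0 : Eu N) := norm_pos_iff.1 <|
    (by positivity : 0 < min (a₀ / R) 1 / 4).trans_le
      (le_norm_lineMap hp hq he hb.le (min_le_right _ _) hpe hqe hτ)
  refine ⟨annulusBallPath hr.le ⟨hx₀.1.le, hx₀.2.le⟩ hρ hρr hρR (by positivity)
    (fun τ => normalize (lineMap (normalize x₀) (normalize x) τ)) v (fun τ hτ => (hv τ hτ).1)
    (fun τ hτ => norm_normalize_eq_one_iff.2 (hne τ hτ)) (fun τ hτ => (hv τ hτ).2)
    (fun τ => inner_normalize_lineMap_nonneg (hb.le.trans hpe) hqe), ?_, ?_, ?_⟩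
  · simp [annulusBallPath]
  · simp [annulusBallPath]
  · have hgap : x - ((R + r) / 2) • normalize x = (‖x‖ - (R + r) / 2) • normalize x := by
      rw [sub_smul, norm_smul_normalize]
    simp only [annulusBallPath, BallPath.gap, lineMap_apply_one, normalize_normalize, hgap,
      norm_smul, hq, mul_one, Real.norm_eq_abs, sq_abs]
    ring

lemma sweptByBalls_annulus (hr : 0 < r) {g : ℝ → ℝ} {c : ℝ} (hc : 0 < c)
    (hg : ∀ x ∈ annulus N r R, c * g (‖x‖ ^ 2) ≤ (R - ‖x‖) * (‖x‖ - r)) :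
    SweptByBalls (annulus N r R) R g := by
  intro x₀ hx₀ ρ₁ hρ₁ a₀ ha₀
  have hR : 0 < R := hr.trans (hx₀.1.trans hx₀.2)
  have hρ : 0 < min ρ₁ (min (‖x₀‖ - r) (R - ‖x₀‖)) :=
    lt_min hρ₁ (lt_min (sub_pos.2 hx₀.1) (sub_pos.2 hx₀.2))
  refine ⟨min ρ₁ (min (‖x₀‖ - r) (R - ‖x₀‖)), R + R * (16 / min (a₀ / R) 1),
    min ρ₁ (min (‖x₀‖ - r) (R - ‖x₀‖)), c, min_le_left _ _, ?_, hρ, hc,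
    fun e he hex₀ x hx hxe => ?_⟩
  · have : 0 < min (a₀ / R) 1 := lt_min (by positivity) one_pos
    positivity
  · obtain ⟨path, hcenter, hradius, hgap⟩ := exists_annulusBallPath hr hx₀ hρ.le
      ((min_le_right _ _).trans (min_le_left _ _)) ((min_le_right _ _).trans (min_le_right _ _))
      ha₀ he hex₀ hx hxe.le
    exact ⟨path, hcenter, hradius, hgap ▸ hg x hx⟩

lemma IsRadialDomain.isOpen {B : Set (Eu N)} (hB : IsRadialDomain B) : IsOpen B := by
  rcases hB with ⟨R, -, rfl⟩ | ⟨r, R, -, -, rfl⟩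
  exacts [isOpen_ball, isOpen_annulus r R]

lemma IsRadialDomain.exists_isRadialWeight {B : Set (Eu N)} (hB : IsRadialDomain B) :
    ∃ R > 0, B ⊆ closedBall 0 R ∧ ∃ g g₁ g₂ : ℝ → ℝ, IsRadialWeight B g g₁ g₂ ∧
      SweptByBalls B R g := by
  rcases hB with ⟨R, hR, rfl⟩ | ⟨r, R, hr, hrR, rfl⟩
  · exact ⟨R, hR, ball_subset_closedBall, _, _, _, isRadialWeight_ball R, sweptByBalls_ball R⟩
  · obtain ⟨g, g₁, g₂, c, hc, hweight, hle⟩ := exists_isRadialWeight_annulus (N := N) hr hrR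
    exact ⟨R, hr.trans hrR, fun x hx => mem_closedBall_zero_iff.2 hx.2.le, g, g₁, g₂, hweight,
      sweptByBalls_annulus hr hc hle⟩

end RadialDomains

/-! ### Reflections -/

section Reflections

variable {B : Set (Eu N)} {e x y : Eu N}

lemma reflHyp_eq_reflection (he : ‖e‖ = 1) (x : Eu N) :
    reflHyp e x = (ℝ ∙ e)ᗮ.reflection x := by
  rw [Submodule.reflection_orthogonal_apply, Submodule.reflection_singleton_apply, he, reflHyp,
    real_inner_comm]
  simp only [RCLike.ofReal_real_eq_id, id, one_pow, div_one]
  module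

lemma norm_reflHyp (he : ‖e‖ = 1) (x : Eu N) : ‖reflHyp e x‖ = ‖x‖ := by
  rw [reflHyp_eq_reflection he, LinearIsometryEquiv.norm_map]

lemma reflHyp_reflHyp (he : ‖e‖ = 1) (x : Eu N) : reflHyp e (reflHyp e x) = x := by
  rw [reflHyp_eq_reflection he, reflHyp_eq_reflection he, Submodule.reflection_reflection]

lemma continuous_reflHyp (e : Eu N) : Continuous (reflHyp e) := by
  unfold reflHyp
  fun_prop

lemma inner_reflHyp (he : ‖e‖ = 1) (x : Eu N) : ⟪reflHyp e x, e⟫ = -⟪x, e⟫ := by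
  rw [reflHyp, inner_sub_left, inner_smul_left, real_inner_self_eq_norm_sq, he, conj_trivial]
  ring

lemma reflHyp_of_inner_eq_zero (h : ⟪x, e⟫ = 0) : reflHyp e x = x := by
  simp [reflHyp, h]

namespace IsRadialDomain

lemma mem_of_norm_eq (hB : IsRadialDomain B) (hx : x ∈ B) (h : ‖y‖ = ‖x‖) : y ∈ B := by
  rcases hB with ⟨R, -, rfl⟩ | ⟨r, R, -, -, rfl⟩
  · rwa [mem_ball_zero_iff, h, ← mem_ball_zero_iff]
  · rwa [mem_ofPred_eq, h]

lemma reflHyp_mem (hB : IsRadialDomain B) (he : ‖e‖ = 1) (hx : x ∈ B) : reflHyp e x ∈ B :=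
  hB.mem_of_norm_eq hx (norm_reflHyp he x)

lemma reflHyp_mem_closure (hB : IsRadialDomain B) (he : ‖e‖ = 1) (hx : x ∈ closure B) :
    reflHyp e x ∈ closure B :=
  map_mem_closure (continuous_reflHyp e) hx fun _ hy => hB.reflHyp_mem he hy

lemma reflHyp_mem_frontier (hB : IsRadialDomain B) (he : ‖e‖ = 1) (hx : x ∈ frontier B) :
    reflHyp e x ∈ frontier B := by
  rw [hB.isOpen.frontier_eq] at hx ⊢
  exact ⟨hB.reflHyp_mem_closure he hx.1, fun h => hx.2 <| by
    simpa only [reflHyp_reflHyp he] using hB.reflHyp_mem he h⟩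

end IsRadialDomain

end Reflections

/-! ### The equation for the reflected difference -/

lemma sum_apply_apply_eq_of_orthonormalBasis {ι κ E : Type*} [Fintype ι] [Fintype κ]
    [NormedAddCommGroup E] [InnerProductSpace ℝ E] [FiniteDimensional ℝ E]
    (b : OrthonormalBasis ι ℝ E) (c : OrthonormalBasis κ ℝ E) (D : E →L[ℝ] E →L[ℝ] ℝ) :
    ∑ i, D (b i) (b i) = ∑ i, D (c i) (c i) := by
  have h := congrArg (TensorProduct.lift D.toLinearMap₁₂)
    ((InnerProductSpace.canonicalCovariantTensor_eq_sum E b).symm.trans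
      (InnerProductSpace.canonicalCovariantTensor_eq_sum E c))
  rwa [map_sum, map_sum] at h

lemma hasLaplacianAt_comp_linearIsometryEquiv (T : Eu N ≃ₗᵢ[ℝ] Eu N) {v : Eu N → ℝ}
    {D : Eu N → Eu N →L[ℝ] ℝ} {D₂ : Eu N →L[ℝ] Eu N →L[ℝ] ℝ} {x : Eu N}
    (hv : ∀ᶠ y in 𝓝 (T x), HasFDerivAt v (D y) y) (hD : HasFDerivAt D D₂ (T x)) :
    HasLaplacianAt (fun y => v (T y))
      (∑ i, D₂ (EuclideanSpace.single i 1) (EuclideanSpace.single i 1)) x := by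
  have hline (i : Fin N) (s : ℝ) :
      HasDerivAt (fun s : ℝ => T (x + s • EuclideanSpace.single i 1))
        (T (EuclideanSpace.single i 1)) s :=
    (T.toContinuousLinearEquiv.hasFDerivAt.comp_hasDerivAt s
      (((hasDerivAt_id s).smul_const (EuclideanSpace.single i (1 : ℝ))).const_add x)).congr_deriv
        (by simp)
  refine ⟨fun i => D₂ (T (EuclideanSpace.single i 1)) (T (EuclideanSpace.single i 1)),
    fun i => ⟨fun s => D (T (x + s • EuclideanSpace.single i 1)) (T (EuclideanSpace.single i 1)),
      ?_, ?_⟩, ?_⟩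
  · have hlim := (hline i 0).continuousAt.tendsto
    rw [zero_smul, add_zero] at hlim
    filter_upwards [hlim.eventually hv] with s hs using hs.comp_hasDerivAt s (hline i s)
  · have hD₀ : HasFDerivAt D D₂ (T (x + (0 : ℝ) • EuclideanSpace.single i (1 : ℝ))) := by
      rwa [zero_smul, add_zero]
    have hDline := hD₀.comp_hasDerivAt (0 : ℝ) (hline i 0)
    exact (hDline.clm_apply (hasDerivAt_const (0 : ℝ) (T (EuclideanSpace.single i 1)))).congr_deriv
      (by simp)
  · simpa using sum_apply_apply_eq_of_orthonormalBasis
      ((EuclideanSpace.basisFun (Fin N) ℝ).map T) (EuclideanSpace.basisFun (Fin N) ℝ) D₂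

/-- A classical solution of `u_t = Δu + f(t,|x|,u)` in `B × (0,∞)` with `u = 0` on `∂B × (0,∞)`,
together with its derivatives: `ut` in time, `Du` and `D2u` the first and second Fréchet derivatives
in space. -/
structure IsClassicalSolution (B : Set (Eu N)) (f : ℝ → ℝ → ℝ → ℝ) (u ut : Eu N → ℝ → ℝ)
    (Du : Eu N → ℝ → (Eu N →L[ℝ] ℝ)) (D2u : Eu N → ℝ → (Eu N →L[ℝ] Eu N →L[ℝ] ℝ)) : Prop where
  cont : ContinuousOn (fun p : Eu N × ℝ => u p.1 p.2) (closure B ×ˢ Ici 0)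
  hasDerivAt : ∀ x ∈ B, ∀ t ∈ Ioi (0 : ℝ), HasDerivAt (fun s => u x s) (ut x t) t
  hasFDerivAt : ∀ x ∈ B, ∀ t ∈ Ioi (0 : ℝ), HasFDerivAt (fun y => u y t) (Du x t) x
  hasFDerivAt₂ : ∀ x ∈ B, ∀ t ∈ Ioi (0 : ℝ), HasFDerivAt (fun y => Du y t) (D2u x t) x
  pde : ∀ x ∈ B, ∀ t ∈ Ioi (0 : ℝ), ut x t =
    (∑ i, D2u x t (EuclideanSpace.single i 1) (EuclideanSpace.single i 1)) + f t ‖x‖ (u x t)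
  bdry : ∀ x ∈ frontier B, ∀ t ∈ Ioi (0 : ℝ), u x t = 0

namespace IsClassicalSolution

variable {B : Set (Eu N)} {f : ℝ → ℝ → ℝ → ℝ} {u ut : Eu N → ℝ → ℝ}
  {Du : Eu N → ℝ → (Eu N →L[ℝ] ℝ)} {D2u : Eu N → ℝ → (Eu N →L[ℝ] Eu N →L[ℝ] ℝ)}

lemma hasHeatOpAt_comp_linearIsometryEquiv (hu : IsClassicalSolution B f u ut Du D2u)
    (hBo : IsOpen B) (T : Eu N ≃ₗᵢ[ℝ] Eu N) {x : Eu N} (hx : T x ∈ B) {t : ℝ} (ht : 0 < t) :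
    HasHeatOpAt (fun y s => u (T y) s) (f t ‖x‖ (u (T x) t)) x t := by
  refine ⟨ut (T x) t, _, hu.hasDerivAt _ hx t ht, hasLaplacianAt_comp_linearIsometryEquiv
    (v := fun y => u y t) (D := fun y => Du y t) T ?_ (hu.hasFDerivAt₂ _ hx t ht), ?_⟩
  · filter_upwards [hBo.mem_nhds hx] with y hy using hu.hasFDerivAt y hy t ht
  · rw [hu.pde _ hx t ht, add_sub_cancel_left, T.norm_map]

lemma isHalfDomainSolution_sub_reflHyp (hu : IsClassicalSolution B f u ut Du D2u)
    (hB : IsRadialDomain B) {K L : ℝ}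
    (hlip : ∀ t ∈ Ici (0 : ℝ), ∀ r ∈ norm '' B, ∀ u₁ ∈ Icc (-K) K, ∀ u₂ ∈ Icc (-K) K,
      |f t r u₁ - f t r u₂| ≤ L * |u₁ - u₂|)
    (hK : ∀ t ∈ Ici (0 : ℝ), ∀ x ∈ closure B, |u x t| ≤ K) {e : Eu N} (he : ‖e‖ = 1) :
    IsHalfDomainSolution B e L fun x t => u x t - u (reflHyp e x) t where
  cont := by
    refine (hu.cont.sub (hu.cont.comp (f := fun p : Eu N × ℝ => (reflHyp e p.1, p.2)) ?_ ?_)).mono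
      (prod_mono_left fun x hx => hx.1)
    · exact (((continuous_reflHyp e).comp continuous_fst).prodMk continuous_snd).continuousOn
    · exact fun p hp => ⟨hB.reflHyp_mem_closure he hp.1, hp.2⟩
  bdry x hx hx' t ht := by
    rcases mem_frontier_or_inner_eq_zero hB.isOpen hx hx' with h | h
    · rw [hu.bdry x h t ht, hu.bdry _ (hB.reflHyp_mem_frontier he h) t ht, sub_self]
    · rw [reflHyp_of_inner_eq_zero h, sub_self]
  pde x hx t ht := by
    have hσx := hB.reflHyp_mem he hx.1
    refine ⟨f t ‖x‖ (u x t) - f t ‖x‖ (u (reflHyp e x) t),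
      hlip t (mem_Ici.2 (le_of_lt ht)) _ (mem_image_of_mem norm hx.1)
        _ (abs_le.1 (hK t (mem_Ici.2 (le_of_lt ht)) _ (subset_closure hx.1)))
        _ (abs_le.1 (hK t (mem_Ici.2 (le_of_lt ht)) _ (subset_closure hσx))),
      (hu.hasHeatOpAt_comp_linearIsometryEquiv hB.isOpen (.refl ℝ (Eu N)) hx.1 ht).sub ?_⟩
    simp only [reflHyp_eq_reflection he] at hσx ⊢
    exact hu.hasHeatOpAt_comp_linearIsometryEquiv hB.isOpen _ hσx ht

lemma eq_zero_of_mem_frontier (hu : IsClassicalSolution B f u ut Du D2u) {x : Eu N}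
    (hx : x ∈ frontier B) : u x 0 = 0 := by
  have hcont : ContinuousOn (fun t => u x t) (Ici 0) :=
    hu.cont.comp (f := fun t => (x, t)) (by fun_prop) fun t ht => ⟨frontier_subset_closure hx, ht⟩
  have hlim : Tendsto (fun t => u x t) (𝓝[>] 0) (𝓝 (u x 0)) :=
    (hcont 0 self_mem_Ici).mono_left (nhdsWithin_mono _ Ioi_subset_Ici_self)
  refine tendsto_nhds_unique hlim (tendsto_const_nhds.congr' ?_)
  filter_upwards [self_mem_nhdsWithin] with t ht using (hu.bdry x hx t ht).symm

end IsClassicalSolution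

/-! ### Reflection inequalities are open in the direction -/

section ReflectionInequality

variable {B : Set (Eu N)} {e x x₀ : Eu N} {z : Eu N → ℝ}

/-- The reflection inequality `z ∘ σ_e ≤ z` on the closed half domain. -/
def ReflectionInequality (B : Set (Eu N)) (e : Eu N) (z : Eu N → ℝ) : Prop :=
  ∀ x ∈ halfCl B e, z (reflHyp e x) ≤ z x

/-- The folding of space along `H(e)` onto `{x·e ≤ 0}`.  Replacing `σ_e` by the folding, reflection
inequalities for different directions can be compared on the common domain `B̄`. -/
def foldHyp (e x : Eu N) : Eu N := x - (2 * max ⟪x, e⟫ 0) • e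

lemma foldHyp_of_nonneg (h : 0 ≤ ⟪x, e⟫) : foldHyp e x = reflHyp e x := by
  rw [foldHyp, max_eq_left h, reflHyp]

lemma foldHyp_of_nonpos (h : ⟪x, e⟫ ≤ 0) : foldHyp e x = x := by
  rw [foldHyp, max_eq_right h, mul_zero, zero_smul, sub_zero]

lemma continuous_uncurry_foldHyp : Continuous fun p : Eu N × Eu N => foldHyp p.1 p.2 := by
  unfold foldHyp
  fun_prop

lemma IsRadialDomain.foldHyp_mem_closure (hB : IsRadialDomain B) (he : ‖e‖ = 1)
    (hx : x ∈ closure B) : foldHyp e x ∈ closure B := by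
  rcases le_total 0 ⟪x, e⟫ with h | h
  · rw [foldHyp_of_nonneg h]
    exact hB.reflHyp_mem_closure he hx
  · rwa [foldHyp_of_nonpos h]

lemma reflectionInequality_iff_foldHyp :
    ReflectionInequality B e z ↔ ∀ x ∈ closure B, z (foldHyp e x) ≤ z x := by
  refine ⟨fun h x hx => ?_, fun h x hx => foldHyp_of_nonneg hx.2 ▸ h x hx.1⟩
  rcases le_total 0 ⟪x, e⟫ with hxe | hxe
  · exact foldHyp_of_nonneg hxe ▸ h x ⟨hx, hxe⟩
  · rw [foldHyp_of_nonpos hxe]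

lemma IsRadialDomain.continuousOn_comp_foldHyp (hB : IsRadialDomain B)
    (hz : ContinuousOn z (closure B)) :
    ContinuousOn (fun p : Eu N × Eu N => z (foldHyp p.1 p.2)) (sphere 0 1 ×ˢ closure B) :=
  hz.comp continuous_uncurry_foldHyp.continuousOn fun _ hp =>
    hB.foldHyp_mem_closure (mem_sphere_zero_iff_norm.1 hp.1) hp.2

lemma IsRadialDomain.isCompact_closure (hB : IsRadialDomain B) : IsCompact (closure B) := by
  obtain ⟨R, -, hBR, -⟩ := hB.exists_isRadialWeight
  exact (isCompact_closedBall 0 R).closure_of_subset hBR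

lemma eventually_sub_foldHyp_le_sub_reflHyp (hB : IsRadialDomain B)
    (hz : ContinuousOn z (closure B)) (he : ‖e‖ = 1) {κ : ℝ} (hκ : 0 < κ) :
    ∀ᶠ e' in 𝓝[sphere 0 1] e, ∀ v : Eu N → ℝ, (∀ x ∈ closure B, |v x - z x| ≤ κ) →
      ∀ x ∈ halfCl B e', z x - z (foldHyp e x) - 3 * κ ≤ v x - v (reflHyp e' x) := by
  obtain ⟨U, hU, hclose⟩ := hB.isCompact_closure.mem_uniformity_of_prod
    (f := fun e' x => z (foldHyp e' x)) (hB.continuousOn_comp_foldHyp hz)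
    (mem_sphere_zero_iff_norm.2 he) (dist_mem_uniformity hκ)
  filter_upwards [hU, self_mem_nhdsWithin] with e' he'U he' v hv x hx
  have hx_close := abs_le.1 (hv x hx.1)
  have hσx_close := abs_le.1 (hv _ (hB.reflHyp_mem_closure (mem_sphere_zero_iff_norm.1 he') hx.1))
  have hfold : dist (z (foldHyp e' x)) (z (foldHyp e x)) < κ := hclose e' he'U x hx.1
  rw [foldHyp_of_nonneg hx.2, Real.dist_eq, abs_lt] at hfold
  linarith [hx_close.1, hσx_close.2, hfold.2]

lemma exists_lt_sub_foldHyp_near (hB : IsRadialDomain B) (hz : ContinuousOn z (closure B))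
    (he : ‖e‖ = 1) (hx₀ : x₀ ∈ closure B) {c : ℝ} (hc : c < z x₀ - z (foldHyp e x₀)) :
    ∃ ρ > 0, ∀ x ∈ closure B, ‖x - x₀‖ < ρ → c < z x - z (foldHyp e x) := by
  have hcont : ContinuousOn (fun x => z x - z (foldHyp e x)) (closure B) :=
    hz.sub ((hB.continuousOn_comp_foldHyp hz).comp (f := fun x => (e, x)) (by fun_prop)
      fun x hx => ⟨mem_sphere_zero_iff_norm.2 he, hx⟩)
  obtain ⟨ρ, hρ, h⟩ := Metric.mem_nhdsWithin_iff.1 ((hcont x₀ hx₀).eventually_const_lt hc)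
  exact ⟨ρ, hρ, fun x hx hxx₀ => h ⟨mem_ball_iff_norm.2 hxx₀, hx⟩⟩

/-- If a profile `z` satisfies the reflection inequality for `e` without being symmetric, then, as
soon as `u(·,t₀)` is close to `z`, the reflection inequality holds for `u(·,t)`, `t ≥ t₀ + 2`, and
all directions near `e`. -/
lemma exists_eventually_reflectionInequality (hB : IsRadialDomain B) {u : Eu N → ℝ → ℝ} {L : ℝ}
    (hL : 0 ≤ L)
    (hw : ∀ e : Eu N, ‖e‖ = 1 → IsHalfDomainSolution B e L fun x t => u x t - u (reflHyp e x) t)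
    (hz : ContinuousOn z (closure B)) (he : ‖e‖ = 1) (hze : ReflectionInequality B e z)
    (hne : ∃ x ∈ halfDom B e, z (reflHyp e x) ≠ z x) :
    ∃ η > 0, ∀ᶠ e' in 𝓝[sphere 0 1] e, ∀ t₀ ≥ 0, (∀ x ∈ closure B, |u x t₀ - z x| ≤ η) →
      ∀ t ≥ t₀ + 2, ReflectionInequality B e' fun x => u x t := by
  obtain ⟨x₀, hx₀, hne⟩ := hne
  obtain ⟨R, hR, hBR, g, g₁, g₂, hg, hswept⟩ := hB.exists_isRadialWeight
  have hx₀_cl := halfDom_subset_halfCl B e hx₀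
  set d := z x₀ - z (foldHyp e x₀)
  have hd : 0 < d := by
    simp only [d, foldHyp_of_nonneg hx₀_cl.2]
    exact sub_pos.2 (lt_of_le_of_ne (hze x₀ hx₀_cl) hne)
  obtain ⟨ρ, hρ, hnear⟩ := exists_lt_sub_foldHyp_near hB hz he hx₀_cl.1
    (show 3 * d / 4 < d by linarith)
  obtain ⟨ε, hε, hnonneg⟩ := hswept.exists_nonneg_add_two hB.isOpen hBR hR hg hx₀.1 hρ
    (half_pos hx₀.2) (half_pos hd) hL
  have hκ : 0 < min (ε / 3) (d / 12) := lt_min (by positivity) (by positivity)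
  have hinner : ∀ᶠ e' in 𝓝[sphere 0 1] e, ⟪x₀, e⟫ / 2 < ⟪x₀, e'⟫ :=
    (continuous_const.inner continuous_id).continuousAt.continuousWithinAt.eventually_const_lt
      (half_lt_self hx₀.2)
  refine ⟨min (ε / 3) (d / 12), hκ, ?_⟩
  filter_upwards [eventually_sub_foldHyp_le_sub_reflHyp hB hz he hκ, hinner, self_mem_nhdsWithin]
    with e' hdiff hinner he' t₀ ht₀ hclose t ht x hx
  rw [mem_sphere_zero_iff_norm] at he'
  have hε_le := min_le_left (ε / 3) (d / 12)
  have hd_le := min_le_right (ε / 3) (d / 12)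
  have hafter := hnonneg e' he' hinner.le _ (hw e' he') t₀ ht₀
    (fun x hx => by linarith [hdiff _ hclose x hx, reflectionInequality_iff_foldHyp.1 hze x hx.1])
    (fun x hx hxx₀ => by linarith [hdiff _ hclose x hx, hnear x hx.1 hxx₀])
  exact sub_nonneg.1 (IsHalfDomainSolution.nonneg_of_nonneg hB.isOpen hB.isCompact_closure hL
    (hw e' he') (by linarith) hafter x hx t ht)

end ReflectionInequality

/-! ### The first moment of a profile -/

section Moment

open MeasureTheory

variable {B : Set (Eu N)} {e x : Eu N} {z : Eu N → ℝ}

/-- The first moment `∫_B z(x) x dx`.  Its scalar product with `e` measures the reflection asymmetry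
of `z` with respect to `H(e)`. -/
def moment (B : Set (Eu N)) (z : Eu N → ℝ) : Eu N := ∫ x in B, z x • x

lemma IsRadialDomain.integrableOn {E : Type*} [NormedAddCommGroup E] (hB : IsRadialDomain B)
    {F : Eu N → E} (hF : ContinuousOn F (closure B)) : IntegrableOn F B :=
  (hF.integrableOn_compact hB.isCompact_closure).mono_set subset_closure

lemma IsRadialDomain.continuousOn_comp_reflHyp (hB : IsRadialDomain B) (he : ‖e‖ = 1)
    (hz : ContinuousOn z (closure B)) : ContinuousOn (fun x => z (reflHyp e x)) (closure B) :=
  hz.comp (continuous_reflHyp e).continuousOn fun _ hx => hB.reflHyp_mem_closure he hx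

lemma IsRadialDomain.setIntegral_comp_reflHyp (hB : IsRadialDomain B) (he : ‖e‖ = 1)
    (F : Eu N → ℝ) : ∫ x in B, F (reflHyp e x) = ∫ x in B, F x := by
  have hpre : (ℝ ∙ e)ᗮ.reflection ⁻¹' B = B := by
    ext x
    exact ⟨fun hx => hB.mem_of_norm_eq hx (LinearIsometryEquiv.norm_map _ x).symm,
      fun hx => hB.mem_of_norm_eq hx (LinearIsometryEquiv.norm_map _ x)⟩
  have h := (ℝ ∙ e)ᗮ.reflection.measurePreserving.setIntegral_preimage_emb
    (ℝ ∙ e)ᗮ.reflection.toHomeomorph.measurableEmbedding F B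
  rw [hpre] at h
  simpa only [reflHyp_eq_reflection he] using h

lemma two_mul_inner_moment (hB : IsRadialDomain B) (hz : ContinuousOn z (closure B))
    (he : ‖e‖ = 1) :
    2 * ⟪moment B z, e⟫ = ∫ x in B, (z x - z (reflHyp e x)) * ⟪x, e⟫ := by
  have hinner : ContinuousOn (fun x : Eu N => ⟪x, e⟫) (closure B) := by fun_prop
  have hz_smul : IntegrableOn (fun x => z x • x) B := hB.integrableOn (hz.smul continuousOn_id)
  have hz_inner : IntegrableOn (fun x => z x * ⟪x, e⟫) B := hB.integrableOn (hz.mul hinner)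
  have hzσ_inner : IntegrableOn (fun x => z (reflHyp e x) * ⟪x, e⟫) B :=
    hB.integrableOn ((hB.continuousOn_comp_reflHyp he hz).mul hinner)
  have hmoment : ⟪moment B z, e⟫ = ∫ x in B, z x * ⟪x, e⟫ := by
    rw [real_inner_comm, moment, ← integral_inner hz_smul]
    simp only [inner_smul_right, real_inner_comm]
  have hrefl : ∫ x in B, z (reflHyp e x) * ⟪x, e⟫ = -⟪moment B z, e⟫ := by
    rw [hmoment, ← hB.setIntegral_comp_reflHyp he, ← integral_neg]
    simp only [inner_reflHyp he, reflHyp_reflHyp he, mul_neg]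
  simp only [sub_mul]
  rw [integral_sub hz_inner hzσ_inner, ← hmoment, hrefl]
  ring

lemma ReflectionInequality.sub_mul_inner_nonneg (hze : ReflectionInequality B e z)
    (hB : IsRadialDomain B) (he : ‖e‖ = 1) (hx : x ∈ closure B) :
    0 ≤ (z x - z (reflHyp e x)) * ⟪x, e⟫ := by
  rcases le_total 0 ⟪x, e⟫ with h | h
  · exact mul_nonneg (sub_nonneg.2 (hze x ⟨hx, h⟩)) h
  · have hσx := hze (reflHyp e x)
      ⟨hB.reflHyp_mem_closure he hx, by rwa [inner_reflHyp he, neg_nonneg]⟩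
    rw [reflHyp_reflHyp he] at hσx
    exact mul_nonneg_of_nonpos_of_nonpos (sub_nonpos.2 hσx) h

lemma ReflectionInequality.inner_moment_nonneg (hze : ReflectionInequality B e z)
    (hB : IsRadialDomain B) (hz : ContinuousOn z (closure B)) (he : ‖e‖ = 1) :
    0 ≤ ⟪moment B z, e⟫ := by
  have h : 0 ≤ 2 * ⟪moment B z, e⟫ := by
    rw [two_mul_inner_moment hB hz he]
    exact setIntegral_nonneg hB.isOpen.measurableSet
      fun x hx => hze.sub_mul_inner_nonneg hB he (subset_closure hx)
  linarith

lemma ReflectionInequality.eq_of_inner_moment_eq_zero (hze : ReflectionInequality B e z)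
    (hB : IsRadialDomain B) (hz : ContinuousOn z (closure B)) (he : ‖e‖ = 1)
    (h₀ : ⟪moment B z, e⟫ = 0) : ∀ x ∈ closure B, z (reflHyp e x) = z x := by
  have hzσ := hB.continuousOn_comp_reflHyp he hz
  have hF : ContinuousOn (fun x => (z x - z (reflHyp e x)) * ⟪x, e⟫) (closure B) :=
    (hz.sub hzσ).mul (by fun_prop)
  have hF_nonneg : ∀ᵐ x ∂volume.restrict B, 0 ≤ (z x - z (reflHyp e x)) * ⟪x, e⟫ :=
    ae_restrict_of_forall_mem hB.isOpen.measurableSet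
      fun x hx => hze.sub_mul_inner_nonneg hB he (subset_closure hx)
  have hF_ae := (setIntegral_eq_zero_iff_of_nonneg_ae hF_nonneg (hB.integrableOn hF)).1 <| by
    rw [← two_mul_inner_moment hB hz he, h₀, mul_zero]
  have hF_zero := Measure.eqOn_open_of_ae_eq hF_ae hB.isOpen (hF.mono subset_closure)
    continuousOn_const
  have hsymm : EqOn (fun x => z (reflHyp e x)) z B := by
    intro x hx
    rcases mul_eq_zero.1 (hF_zero hx) with h | h
    · exact (sub_eq_zero.1 h).symm
    · simp only [reflHyp_of_inner_eq_zero h]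
  exact hsymm.of_subset_closure hzσ hz subset_closure subset_rfl

lemma inner_moment_eq_zero_of_reflHyp_eq (hB : IsRadialDomain B) (hz : ContinuousOn z (closure B))
    (he : ‖e‖ = 1) (h : ∀ x ∈ halfDom B e, z (reflHyp e x) = z x) : ⟪moment B z, e⟫ = 0 := by
  have hzero : ∀ x ∈ B, (z x - z (reflHyp e x)) * ⟪x, e⟫ = 0 := by
    intro x hx
    rcases lt_trichotomy ⟪x, e⟫ 0 with hxe | hxe | hxe
    · have hσx := h (reflHyp e x) ⟨hB.reflHyp_mem he hx, by rwa [inner_reflHyp he, neg_pos]⟩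
      rw [reflHyp_reflHyp he] at hσx
      rw [hσx, sub_self, zero_mul]
    · rw [hxe, mul_zero]
    · rw [h x ⟨hx, hxe⟩, sub_self, zero_mul]
  have h₂ := two_mul_inner_moment hB hz he
  rw [setIntegral_eq_zero_of_forall_eq_zero hzero] at h₂
  linarith

end Moment

/-! ### Directions of reflection on the sphere -/

section Hemisphere

variable {E : Type*} [NormedAddCommGroup E] [InnerProductSpace ℝ E]

lemma inner_normalize_right (v w : E) : ⟪v, NormedSpace.normalize w⟫ = ‖w‖⁻¹ * ⟪v, w⟫ :=
  real_inner_smul_right v w ‖w‖⁻¹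

lemma tendsto_normalize_nhdsWithin_sphere {v : E} (hv : v ≠ 0) :
    Tendsto NormedSpace.normalize (𝓝 v) (𝓝[sphere 0 1] (NormedSpace.normalize v)) := by
  refine tendsto_nhdsWithin_iff.2 ⟨(continuous_norm.continuousAt.inv₀
    (norm_ne_zero_iff.2 hv)).smul continuousAt_id, ?_⟩
  filter_upwards [isOpen_ne.mem_nhds hv] with w hw
  exact mem_sphere_zero_iff_norm.2 (NormedSpace.norm_normalize_eq_one_iff.2 hw)

lemma normalize_mem_of_mem_closure {A : Set E} (hA : IsClosed A) {v : E} (hv : v ≠ 0)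
    (h : v ∈ closure (NormedSpace.normalize ⁻¹' A)) : NormedSpace.normalize v ∈ A := by
  have hcont : ContinuousAt NormedSpace.normalize v :=
    (tendsto_normalize_nhdsWithin_sphere hv).mono_right nhdsWithin_le_nhds
  rw [← hA.closure_eq]
  exact hcont.continuousWithinAt.mem_closure h fun _ hw => hw

lemma closure_setOf_inner_pos {V : E} (hV : V ≠ 0) :
    closure {v : E | 0 < ⟪V, v⟫} = {v : E | 0 ≤ ⟪V, v⟫} := by
  have hopen : IsOpenMap (innerSL ℝ V) :=
    (innerSL ℝ V).isOpenMap_of_ne_zero fun h => hV <| by simpa using congrArg (· V) h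
  have h := hopen.preimage_closure_eq_closure_preimage (innerSL ℝ V).continuous (Ioi 0)
  rw [closure_Ioi] at h
  exact h.symm

/-- The open hemisphere around `V` is connected, so openness and closedness spread `A` over it. -/
lemma mem_of_inner_nonneg_of_isClosed {A : Set E} {V e₀ e : E} (hA : IsClosed A) (hV : V ≠ 0)
    (hopen : ∀ e ∈ A, ‖e‖ = 1 → 0 < ⟪V, e⟫ → A ∈ 𝓝[sphere 0 1] e)
    (he₀ : ‖e₀‖ = 1) (hVe₀ : 0 ≤ ⟪V, e₀⟫) (hAe₀ : A ∈ 𝓝[sphere 0 1] e₀)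
    (he : ‖e‖ = 1) (hVe : 0 ≤ ⟪V, e⟫) : e ∈ A := by
  have ne_zero_of_norm {v : E} (hv : ‖v‖ = 1) : v ≠ 0 :=
    norm_ne_zero_iff.1 (hv.trans_ne one_ne_zero)
  have hcone {v : E} (hv : v ≠ 0) (hAv : A ∈ 𝓝[sphere 0 1] (NormedSpace.normalize v)) :
      v ∈ interior (NormedSpace.normalize ⁻¹' A) :=
    mem_interior_iff_mem_nhds.2 (tendsto_normalize_nhdsWithin_sphere hv hAv)
  have hconn : IsPreconnected {v : E | 0 < ⟪V, v⟫} :=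
    (convex_halfSpace_gt (innerSL ℝ V).toLinearMap.isLinear 0).isPreconnected
  have hsub : {v : E | 0 < ⟪V, v⟫} ⊆ interior (NormedSpace.normalize ⁻¹' A) := by
    refine hconn.subset_of_closure_inter_subset isOpen_interior ?_ ?_
    · rw [inter_comm]
      refine mem_closure_iff.1 ((closure_setOf_inner_pos hV).ge hVe₀) _ isOpen_interior
        (hcone (ne_zero_of_norm he₀) ?_)
      rwa [NormedSpace.normalize_eq_self_of_norm_eq_one he₀]
    · rintro v ⟨hvA, hVv : 0 < ⟪V, v⟫⟩
      have hv : v ≠ 0 := by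
        rintro rfl
        exact (inner_zero_right (𝕜 := ℝ) V).not_gt hVv
      refine hcone hv (hopen _ (normalize_mem_of_mem_closure hA hv
        (closure_mono interior_subset hvA)) (NormedSpace.norm_normalize_eq_one_iff.2 hv) ?_)
      rw [inner_normalize_right]
      exact mul_pos (inv_pos.2 (norm_pos_iff.2 hv)) hVv
  have he_closure : e ∈ closure (NormedSpace.normalize ⁻¹' A) :=
    closure_mono (hsub.trans interior_subset) ((closure_setOf_inner_pos hV).ge hVe)
  exact NormedSpace.normalize_eq_self_of_norm_eq_one he ▸
    normalize_mem_of_mem_closure hA (ne_zero_of_norm he) he_closure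

end Hemisphere

section Bisection

variable {b e e₀ x y : Eu N}

lemma reflHyp_neg (e x : Eu N) : reflHyp (-e) x = reflHyp e x := by
  simp [reflHyp]

lemma reflHyp_reflHyp_left (hb : ‖b‖ = 1) (e x : Eu N) :
    reflHyp (reflHyp b e) x = reflHyp b (reflHyp e (reflHyp b x)) := by
  have hinner : ⟪x, (ℝ ∙ b)ᗮ.reflection e⟫ = ⟪(ℝ ∙ b)ᗮ.reflection x, e⟫ := by
    rw [← LinearIsometryEquiv.inner_map_map (ℝ ∙ b)ᗮ.reflection, Submodule.reflection_reflection]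
  simp only [reflHyp_eq_reflection hb]
  rw [reflHyp, hinner, reflHyp, map_sub, map_smul, Submodule.reflection_reflection]

lemma reflHyp_normalize_sub (hne : x ≠ y) (h : ‖x‖ = ‖y‖) :
    reflHyp (NormedSpace.normalize (x - y)) x = y := by
  rw [← sub_ne_zero] at hne
  have hspan : (ℝ ∙ NormedSpace.normalize (x - y)) = ℝ ∙ (x - y) :=
    Submodule.span_singleton_smul_eq (inv_ne_zero (norm_ne_zero_iff.2 hne)).isUnit _
  rw [reflHyp_eq_reflection (NormedSpace.norm_normalize_eq_one_iff.2 hne)]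
  simp only [hspan, Submodule.reflection_sub h]

lemma one_sub_inner_normalize_add_le (he : ‖e‖ = 1) (he₀ : ‖e₀‖ = 1) (hne : e₀ + e ≠ 0) :
    1 - ⟪NormedSpace.normalize (e₀ + e), e₀⟫ ≤ (1 - ⟪e, e₀⟫) / 2 := by
  have hsq : ‖e₀ + e‖ ^ 2 = 2 + 2 * ⟪e, e₀⟫ := by
    rw [norm_add_sq_real, he, he₀, real_inner_comm]
    ring
  have hpos : 0 < ‖e₀ + e‖ := norm_pos_iff.2 hne
  have hle : ‖e₀ + e‖ ≤ 2 := by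
    linarith [norm_add_le e₀ e]
  have hcos : ⟪NormedSpace.normalize (e₀ + e), e₀⟫ = ‖e₀ + e‖ / 2 := by
    rw [real_inner_comm, inner_normalize_right, inner_add_right, real_inner_self_eq_norm_sq, he₀,
      real_inner_comm]
    field_simp
    linarith
  rw [hcos]
  nlinarith

/-- Up to sign, `e` is the reflection of `e₀` in the direction bisecting the angle between `e` and
`e₀`, and repeated bisection leads into any neighborhood of `e₀`. -/
lemma sphere_subset_of_reflHyp_mem {G : Set (Eu N)} (hneg : ∀ e, -e ∈ G → e ∈ G) (he₀ : ‖e₀‖ = 1)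
    (hG : G ∈ 𝓝[sphere 0 1] e₀) (hrefl : ∀ b ∈ G, ‖b‖ = 1 → reflHyp b e₀ ∈ G) :
    sphere 0 1 ⊆ G := by
  obtain ⟨η, hη, hball⟩ := Metric.mem_nhdsWithin_iff.1 hG
  have hbisect : ∀ n : ℕ, ∀ e, ‖e‖ = 1 → 1 - ⟪e, e₀⟫ < η ^ 2 / 2 * 2 ^ n → e ∈ G := by
    intro n
    induction n with
    | zero =>
      intro e he hcos
      refine hball ⟨mem_ball_iff_norm.2 (lt_of_pow_lt_pow_left₀ 2 hη.le ?_),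
        mem_sphere_zero_iff_norm.2 he⟩
      rw [norm_sub_sq_real, he, he₀]
      linarith
    | succ n ih =>
      intro e he hcos
      refine hneg e ?_
      rcases eq_or_ne (e₀ + e) 0 with h | h
      · rw [← eq_neg_of_add_eq_zero_left h]
        exact mem_of_mem_nhdsWithin (mem_sphere_zero_iff_norm.2 he₀) hG
      · have hbG := ih _ (NormedSpace.norm_normalize_eq_one_iff.2 h) <| by
          rw [pow_succ _ n] at hcos
          linarith [one_sub_inner_normalize_add_le he he₀ h]
        have hmem := hrefl _ hbG (NormedSpace.norm_normalize_eq_one_iff.2 h)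
        rw [← sub_neg_eq_add] at h hmem
        rwa [reflHyp_normalize_sub (sub_ne_zero.1 h) (by rw [norm_neg, he, he₀])] at hmem
  intro e he
  obtain ⟨n, hn⟩ := pow_unbounded_of_one_lt ((1 - ⟪e, e₀⟫) / (η ^ 2 / 2)) one_lt_two
  refine hbisect n e (mem_sphere_zero_iff_norm.1 he) ?_
  rwa [div_lt_iff₀' (by positivity)] at hn

end Bisection

/-! ### The symmetry axis -/

section Axis

variable {B : Set (Eu N)} {Ω : Set (Eu N → ℝ)} {e₀ p : Eu N} {z : Eu N → ℝ}

lemma foliatedSchwarzOn_of_reflectionInequality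
    (h : ∀ e, ‖e‖ = 1 → 0 ≤ ⟪p, e⟫ → ReflectionInequality B e z) :
    FoliatedSchwarzOn (closure B) z p := by
  intro x hx y _ hxy hyx
  rcases eq_or_ne x y with rfl | hne
  · exact le_rfl
  have hpe : 0 ≤ ⟪p, NormedSpace.normalize (x - y)⟫ := by
    rw [inner_normalize_right, inner_sub_right, real_inner_comm, real_inner_comm y]
    exact mul_nonneg (inv_nonneg.2 (norm_nonneg _)) (sub_nonneg.2 hyx)
  have hxe : 0 ≤ ⟪x, NormedSpace.normalize (x - y)⟫ := by
    have hxy_le := real_inner_le_norm x y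
    rw [inner_normalize_right, inner_sub_right, real_inner_self_eq_norm_mul_norm]
    exact mul_nonneg (inv_nonneg.2 (norm_nonneg _)) (sub_nonneg.2 (hxy ▸ hxy_le))
  have hz := h _ (NormedSpace.norm_normalize_eq_one_iff.2 (sub_ne_zero.2 hne)) hpe x ⟨hx, hxe⟩
  rwa [reflHyp_normalize_sub hne hxy] at hz

/-- The unit vectors `e` for which all functions in `Ω` satisfy the reflection inequality. -/
def reflDirs (B : Set (Eu N)) (Ω : Set (Eu N → ℝ)) : Set (Eu N) :=
  {e ∈ sphere 0 1 | ∀ z ∈ Ω, ReflectionInequality B e z}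

lemma isClosed_reflDirs (hB : IsRadialDomain B) (hΩ : ∀ z ∈ Ω, ContinuousOn z (closure B)) :
    IsClosed (reflDirs B Ω) := by
  have hEq : reflDirs B Ω = sphere 0 1 ∩ ⋂ z ∈ Ω, ⋂ x ∈ closure B,
      {e ∈ sphere 0 1 | z (foldHyp e x) ≤ z x} := by
    ext e
    simp only [reflDirs, reflectionInequality_iff_foldHyp, mem_inter_iff, mem_iInter, mem_ofPred_eq]
    exact ⟨fun h => ⟨h.1, fun z hz x hx => ⟨h.1, h.2 z hz x hx⟩⟩,
      fun h => ⟨h.1, fun z hz x hx => (h.2 z hz x hx).2⟩⟩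
  rw [hEq]
  refine isClosed_sphere.inter <| isClosed_biInter fun z hz => isClosed_biInter fun x hx =>
    isClosed_sphere.isClosed_le ?_ continuousOn_const
  exact (hB.continuousOn_comp_foldHyp (hΩ z hz)).comp (f := fun e => (e, x)) (by fun_prop)
    fun e he => ⟨he, hx⟩

lemma mem_reflDirs_of_inner_moment_nonneg (hB : IsRadialDomain B)
    (hΩ : ∀ z ∈ Ω, ContinuousOn z (closure B))
    (hopen : ∀ e ∈ reflDirs B Ω, ∀ z ∈ Ω, (∃ x ∈ halfDom B e, z (reflHyp e x) ≠ z x) →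
      reflDirs B Ω ∈ 𝓝[sphere 0 1] e)
    (he₀ : ‖e₀‖ = 1) (h₀ : reflDirs B Ω ∈ 𝓝[sphere 0 1] e₀) (hz : z ∈ Ω) (hV : moment B z ≠ 0)
    {e : Eu N} (he : ‖e‖ = 1) (hVe : 0 ≤ ⟪moment B z, e⟫) : e ∈ reflDirs B Ω := by
  have he₀_mem := mem_of_mem_nhdsWithin (mem_sphere_zero_iff_norm.2 he₀) h₀
  refine mem_of_inner_nonneg_of_isClosed (isClosed_reflDirs hB hΩ) hV ?_ he₀
    ((he₀_mem.2 z hz).inner_moment_nonneg hB (hΩ z hz) he₀) h₀ he hVe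
  intro e' he'_mem he' hpos
  refine hopen e' he'_mem z hz ?_
  contrapose! hpos
  exact (inner_moment_eq_zero_of_reflHyp_eq hB (hΩ z hz) he' hpos).le

lemma sphere_subset_reflDirs_of_moment_eq_zero (hB : IsRadialDomain B)
    (hΩ : ∀ z ∈ Ω, ContinuousOn z (closure B)) (he₀ : ‖e₀‖ = 1)
    (h₀ : reflDirs B Ω ∈ 𝓝[sphere 0 1] e₀) (hV : ∀ z ∈ Ω, moment B z = 0) :
    sphere 0 1 ⊆ reflDirs B Ω := by
  have hsymm : reflDirs B Ω ⊆ {e | ∀ z ∈ Ω, ∀ x ∈ closure B, z (reflHyp e x) = z x} :=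
    fun e he z hz => (he.2 z hz).eq_of_inner_moment_eq_zero hB (hΩ z hz)
      (mem_sphere_zero_iff_norm.1 he.1) (by rw [hV z hz, inner_zero_left])
  have hall : sphere 0 1 ⊆ {e | ∀ z ∈ Ω, ∀ x ∈ closure B, z (reflHyp e x) = z x} := by
    refine sphere_subset_of_reflHyp_mem
      (fun e he => by simpa only [mem_ofPred_eq, reflHyp_neg] using he) he₀
      (mem_of_superset h₀ hsymm) fun b hbG hb z hz x hx => ?_
    have hσx := hB.reflHyp_mem_closure hb hx
    rw [reflHyp_reflHyp_left hb, hbG z hz _ (hB.reflHyp_mem_closure he₀ hσx),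
      hsymm (mem_of_mem_nhdsWithin (mem_sphere_zero_iff_norm.2 he₀) h₀) z hz _ hσx, hbG z hz x hx]
  exact fun e he => ⟨he, fun z hz x hx => (hall he z hz x hx.1).le⟩

lemma exists_axis (hB : IsRadialDomain B) (hΩ : ∀ z ∈ Ω, ContinuousOn z (closure B))
    (hopen : ∀ e ∈ reflDirs B Ω, ∀ z ∈ Ω, (∃ x ∈ halfDom B e, z (reflHyp e x) ≠ z x) →
      reflDirs B Ω ∈ 𝓝[sphere 0 1] e)
    (he₀ : ‖e₀‖ = 1) (h₀ : reflDirs B Ω ∈ 𝓝[sphere 0 1] e₀) :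
    ∃ p : Eu N, ‖p‖ = 1 ∧ ∀ z ∈ Ω, FoliatedSchwarzOn (closure B) z p := by
  suffices h : ∃ p : Eu N, ‖p‖ = 1 ∧ ∀ e, ‖e‖ = 1 → 0 ≤ ⟪p, e⟫ → e ∈ reflDirs B Ω by
    obtain ⟨p, hp, hmem⟩ := h
    exact ⟨p, hp, fun z hz => foliatedSchwarzOn_of_reflectionInequality
      fun e he hpe => (hmem e he hpe).2 z hz⟩
  by_cases hV : ∀ z ∈ Ω, moment B z = 0
  · exact ⟨e₀, he₀, fun e he _ => sphere_subset_reflDirs_of_moment_eq_zero hB hΩ he₀ h₀ hV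
      (mem_sphere_zero_iff_norm.2 he)⟩
  · push Not at hV
    obtain ⟨z, hz, hV⟩ := hV
    refine ⟨NormedSpace.normalize (moment B z), NormedSpace.norm_normalize_eq_one_iff.2 hV,
      fun e he hpe => mem_reflDirs_of_inner_moment_nonneg hB hΩ hopen he₀ h₀ hz hV he ?_⟩
    rw [real_inner_comm, inner_normalize_right] at hpe
    rw [real_inner_comm]
    exact nonneg_of_mul_nonneg_right hpe (inv_pos.2 (norm_pos_iff.2 hV))

end Axis

/-! ### Reflection inequalities on the omega limit set -/

section OmegaLimitSet

variable {B : Set (Eu N)} {u : Eu N → ℝ → ℝ} {z : Eu N → ℝ} {e : Eu N}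

lemma exists_ge_forall_abs_sub_le_of_mem_omegaLimitSet (hz : z ∈ omegaLimitSet B u) (T : ℝ) {ε : ℝ}
    (hε : 0 < ε) : ∃ t ≥ T, ∀ x ∈ closure B, |u x t - z x| ≤ ε := by
  obtain ⟨-, t, ht, hconv⟩ := hz
  obtain ⟨n₀, hn₀⟩ := hconv ε hε
  obtain ⟨n, hn, hTn⟩ := ((eventually_ge_atTop n₀).and (ht.eventually_ge_atTop T)).exists
  exact ⟨t n, hTn, hn₀ n hn⟩

lemma mem_reflDirs_omegaLimitSet (hB : IsRadialDomain B) (he : ‖e‖ = 1) {T : ℝ}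
    (h : ∀ t ≥ T, ReflectionInequality B e fun x => u x t) :
    e ∈ reflDirs B (omegaLimitSet B u) := by
  refine ⟨mem_sphere_zero_iff_norm.2 he, fun z hz x hx => le_of_forall_pos_le_add fun ε hε => ?_⟩
  obtain ⟨t, ht, hclose⟩ := exists_ge_forall_abs_sub_le_of_mem_omegaLimitSet hz T (half_pos hε)
  have hx_close := abs_le.1 (hclose x hx.1)
  have hσx_close := abs_le.1 (hclose _ (hB.reflHyp_mem_closure he hx.1))
  have hrefl : u (reflHyp e x) t ≤ u x t := h t ht x hx
  linarith [hx_close.2, hσx_close.1]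

lemma reflDirs_omegaLimitSet_mem_nhdsWithin (hB : IsRadialDomain B) {L : ℝ} (hL : 0 ≤ L)
    (hw : ∀ e : Eu N, ‖e‖ = 1 → IsHalfDomainSolution B e L fun x t => u x t - u (reflHyp e x) t)
    (hz : ContinuousOn z (closure B)) (he : ‖e‖ = 1) (hze : ReflectionInequality B e z)
    (hne : ∃ x ∈ halfDom B e, z (reflHyp e x) ≠ z x)
    (hclose : ∀ η > 0, ∃ t ≥ 0, ∀ x ∈ closure B, |u x t - z x| ≤ η) :
    reflDirs B (omegaLimitSet B u) ∈ 𝓝[sphere 0 1] e := by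
  obtain ⟨η, hη, hnear⟩ := exists_eventually_reflectionInequality hB hL hw hz he hze hne
  obtain ⟨t, ht, htz⟩ := hclose η hη
  filter_upwards [hnear, self_mem_nhdsWithin] with e' h he'
  exact mem_reflDirs_omegaLimitSet hB (mem_sphere_zero_iff_norm.1 he') (h t ht htz)

end OmegaLimitSet

lemma IsClassicalSolution.reflectionInequality_zero {B : Set (Eu N)} {f : ℝ → ℝ → ℝ → ℝ}
    {u ut : Eu N → ℝ → ℝ} {Du : Eu N → ℝ → (Eu N →L[ℝ] ℝ)}
    {D2u : Eu N → ℝ → (Eu N →L[ℝ] Eu N →L[ℝ] ℝ)} (hu : IsClassicalSolution B f u ut Du D2u)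
    (hB : IsRadialDomain B) {e : Eu N} (he : ‖e‖ = 1)
    (h : ∀ x ∈ halfDom B e, u (reflHyp e x) 0 ≤ u x 0) :
    ReflectionInequality B e fun x => u x 0 := by
  intro x hx
  by_cases hx' : x ∈ halfDom B e
  · exact h x hx'
  · rcases mem_frontier_or_inner_eq_zero hB.isOpen hx hx' with hx' | hx'
    · simp only [hu.eq_zero_of_mem_frontier hx',
        hu.eq_zero_of_mem_frontier (hB.reflHyp_mem_frontier he hx'), le_refl]
    · rw [reflHyp_of_inner_eq_zero hx']

theorem asymptotic_foliated_schwarz_symmetry_semilinear_general {B : Set (Eu N)}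
    (hB : IsRadialDomain B) {f : ℝ → ℝ → ℝ → ℝ}
    (hf_lip : ∀ K > (0 : ℝ), ∃ L > (0 : ℝ), ∀ t ∈ Ici (0 : ℝ), ∀ r ∈ norm '' B,
      ∀ u₁ ∈ Icc (-K) K, ∀ u₂ ∈ Icc (-K) K, |f t r u₁ - f t r u₂| ≤ L * |u₁ - u₂|)
    {u ut : Eu N → ℝ → ℝ} {u₀ : Eu N → ℝ} {Du : Eu N → ℝ → (Eu N →L[ℝ] ℝ)}
    {D2u : Eu N → ℝ → (Eu N →L[ℝ] Eu N →L[ℝ] ℝ)} (hu : IsClassicalSolution B f u ut Du D2u)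
    (hinit : ∀ x ∈ B, u x 0 = u₀ x)
    (hU1 : ∃ e : Eu N, ‖e‖ = 1 ∧ (∀ x ∈ halfDom B e, u₀ (reflHyp e x) ≤ u₀ x) ∧
      ∃ x ∈ halfDom B e, u₀ (reflHyp e x) ≠ u₀ x)
    (hU2 : ∃ C : ℝ, ∀ t ∈ Ici (0 : ℝ), ∀ x ∈ closure B, |u x t| ≤ C) :
    ∃ p : Eu N, ‖p‖ = 1 ∧ ∀ z ∈ omegaLimitSet B u, FoliatedSchwarzOn (closure B) z p := by
  obtain ⟨C, hC⟩ := hU2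
  obtain ⟨L, hL, hlip⟩ := hf_lip (max C 1) (lt_max_of_lt_right one_pos)
  obtain ⟨e₀, he₀, hrefl, x₀, hx₀, hne⟩ := hU1
  have hw (e : Eu N) (he : ‖e‖ = 1) :
      IsHalfDomainSolution B e L fun x t => u x t - u (reflHyp e x) t :=
    hu.isHalfDomainSolution_sub_reflHyp hB hlip
      (fun t ht x hx => (hC t ht x hx).trans (le_max_left C 1)) he
  have hcont₀ : ContinuousOn (fun x => u x 0) (closure B) :=
    hu.cont.comp (f := fun x => (x, 0)) (by fun_prop) fun x hx => ⟨hx, self_mem_Ici⟩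
  have hu₀ (x : Eu N) (hx : x ∈ halfDom B e₀) :
      u x 0 = u₀ x ∧ u (reflHyp e₀ x) 0 = u₀ (reflHyp e₀ x) :=
    ⟨hinit x hx.1, hinit _ (hB.reflHyp_mem he₀ hx.1)⟩
  have hrefl₀ : ReflectionInequality B e₀ fun x => u x 0 :=
    hu.reflectionInequality_zero hB he₀ fun x hx => by
      rw [(hu₀ x hx).1, (hu₀ x hx).2]
      exact hrefl x hx
  refine exists_axis hB (fun z hz => hz.1) (fun e he z hz hne => ?_) he₀ ?_
  · exact reflDirs_omegaLimitSet_mem_nhdsWithin hB hL.le hw hz.1 (mem_sphere_zero_iff_norm.1 he.1)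
      (he.2 z hz) hne fun η hη => exists_ge_forall_abs_sub_le_of_mem_omegaLimitSet hz 0 hη
  · refine reflDirs_omegaLimitSet_mem_nhdsWithin hB hL.le hw hcont₀ he₀ hrefl₀
      ⟨x₀, hx₀, by rwa [(hu₀ x₀ hx₀).1, (hu₀ x₀ hx₀).2]⟩ fun η hη => ⟨0, le_rfl, fun x _ => ?_⟩
    rw [sub_self, abs_zero]
    exact hη.le

/-- Theorem `maintheo-simple` of the paper:
asymptotic foliated Schwarz symmetry for the semilinear problem
`u_t = Δu + f(t,|x|,u)` in `B × (0,∞)`, `u = 0` on `∂B × (0,∞)`, `u(·,0) = u₀`,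
under the reflection hypothesis (U1) on `u₀` and uniform boundedness (U2).

The solution is encoded by `u` together with its time derivative `ut`, spatial
differential `Du` and spatial second differential `D2u` on `B × (0,∞)`
(`C^{2,1}` regularity), continuity on `B̄ × [0,∞)`, and the Laplacian is
`Δu = ∑ i, D²u(eᵢ, eᵢ)`. -/
theorem asymptotic_foliated_schwarz_symmetry_semilinear
    (N : ℕ) (hN : 2 ≤ N)
    (B : Set (EuclideanSpace ℝ (Fin N))) (hB : IsRadialDomain B)
    (f : ℝ → ℝ → ℝ → ℝ)
    (Iset : Set ℝ) (hI : Iset = closure ((fun x : EuclideanSpace ℝ (Fin N) => ‖x‖) '' B))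
    -- (f1): continuity in (t,r) and local Lipschitz continuity in u, uniform in (t,r)
    (hf_cont : ∀ s : ℝ, ContinuousOn (fun p : ℝ × ℝ => f p.1 p.2 s) (Ici 0 ×ˢ Iset))
    (hf_lip : ∀ K > (0:ℝ), ∃ L > (0:ℝ), ∀ t ∈ Ici (0:ℝ), ∀ r ∈ Iset,
      ∀ u₁ ∈ Icc (-K) K, ∀ u₂ ∈ Icc (-K) K, |f t r u₁ - f t r u₂| ≤ L * |u₁ - u₂|)
    -- (f2): boundedness of f(·,·,0)
    (hf_bdd : ∃ C : ℝ, ∀ t ∈ Ici (0:ℝ), ∀ r ∈ Iset, |f t r 0| ≤ C)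
    -- the solution and its derivatives
    (u : EuclideanSpace ℝ (Fin N) → ℝ → ℝ)
    (u₀ : EuclideanSpace ℝ (Fin N) → ℝ)
    (ut : EuclideanSpace ℝ (Fin N) → ℝ → ℝ)
    (Du : EuclideanSpace ℝ (Fin N) → ℝ → (EuclideanSpace ℝ (Fin N) →L[ℝ] ℝ))
    (D2u : EuclideanSpace ℝ (Fin N) → ℝ →
      (EuclideanSpace ℝ (Fin N) →L[ℝ] EuclideanSpace ℝ (Fin N) →L[ℝ] ℝ))
    -- u ∈ C(B̄ × [0,∞))
    (hu_cont : ContinuousOn (fun p : EuclideanSpace ℝ (Fin N) × ℝ => u p.1 p.2)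
      (closure B ×ˢ Ici 0))
    -- u ∈ C^{2,1}(B × (0,∞)): the derivatives exist and are continuous there
    (hut : ∀ x ∈ B, ∀ t ∈ Ioi (0:ℝ), HasDerivAt (fun s => u x s) (ut x t) t)
    (hDu : ∀ x ∈ B, ∀ t ∈ Ioi (0:ℝ), HasFDerivAt (fun y => u y t) (Du x t) x)
    (hD2u : ∀ x ∈ B, ∀ t ∈ Ioi (0:ℝ), HasFDerivAt (fun y => Du y t) (D2u x t) x)
    (hreg : ContinuousOn (fun p : EuclideanSpace ℝ (Fin N) × ℝ =>
      (ut p.1 p.2, Du p.1 p.2, D2u p.1 p.2)) (B ×ˢ Ioi 0))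
    -- the equation u_t = Δu + f(t,|x|,u) in B × (0,∞)
    (hPDE : ∀ x ∈ B, ∀ t ∈ Ioi (0:ℝ),
      ut x t = (∑ i, D2u x t (EuclideanSpace.single i 1) (EuclideanSpace.single i 1))
        + f t ‖x‖ (u x t))
    -- the boundary condition u = 0 on ∂B × (0,∞)
    (hbc : ∀ x ∈ frontier B, ∀ t ∈ Ioi (0:ℝ), u x t = 0)
    -- the initial condition u(·,0) = u₀
    (hinit : ∀ x ∈ closure B, u x 0 = u₀ x)
    -- (U1): reflection inequality for the initial profile
    (hU1 : ∃ e : EuclideanSpace ℝ (Fin N), ‖e‖ = 1 ∧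
      (∀ x ∈ halfDom B e, u₀ (reflHyp e x) ≤ u₀ x) ∧
      (∃ x ∈ halfDom B e, u₀ (reflHyp e x) ≠ u₀ x))
    -- (U2): uniform boundedness
    (hU2 : ∃ C : ℝ, ∀ t ∈ Ici (0:ℝ), ∀ x ∈ closure B, |u x t| ≤ C) :
    ∃ p : EuclideanSpace ℝ (Fin N), ‖p‖ = 1 ∧
      ∀ z ∈ omegaLimitSet B u, FoliatedSchwarzOn (closure B) z p :=
  asymptotic_foliated_schwarz_symmetry_semilinear_general hB
    (fun K hK => (hf_lip K hK).imp fun _ hL =>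
      ⟨hL.1, fun t ht r hr => hL.2 t ht r (hI ▸ subset_closure hr)⟩)
    ⟨hu_cont, hut, hDu, hD2u, hPDE, hbc⟩ (fun x hx => hinit x (subset_closure hx)) hU1 hU2

end
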